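/- Let Ω⊂ℝⁿ be a simply connected domain and f:Ω→ℝᵐ a locally Lipschitz map satisfying rank Df≤1 almost everywhere in Ω. Then there exist C^∞-smooth maps f_i:Ω→ℝᵐ with rank Df_i≤1 everywhere in Ω such that f_i→f uniformly on every compact subset K⊂Ω. -/

import Mathlib

open Set Metric MeasureTheory
open scoped NNReal ENNReal Topology

/-- `f` is locally Lipschitz on the open set `Ω`. -/
def LocLipOn {E X : Type*} [NormedAddCommGroup E] [NormedSpace ℝ E] [PseudoMetricSpace X]
    (f : E → X) (Ω : Set E) : Prop :=
  ∀ x ∈ Ω, ∃ r > 0, Metric.ball x r ⊆ Ω ∧ ∃ K : ℝ≥0, LipschitzOnWith K f (Metric.ball x r)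

/-- The rank of the derivative of `f` at `x`. -/
noncomputable def derivRank {E F : Type*} [NormedAddCommGroup E] [NormedSpace ℝ E]
    [NormedAddCommGroup F] [NormedSpace ℝ F] (f : E → F) (x : E) : ℕ :=
  Module.finrank ℝ (LinearMap.range ((fderiv ℝ f x) : E →ₗ[ℝ] F))


section Closed

variable {E : Type*} [NormedAddCommGroup E] [NormedSpace ℝ E]
  [MeasurableSpace E] [BorelSpace E] [FiniteDimensional ℝ E]
  {μ : Measure E} [μ.IsAddHaarMeasure]

/-- A locally integrable function with compact support is integrable. -/
lemma locInt_integrable {p : E → ℝ} (hp : LocallyIntegrable p μ) (hc : HasCompactSupport p) :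
    Integrable p μ :=
  (integrableOn_iff_integrable_of_support_subset (subset_tsupport p)).1
    (hp.integrableOn_isCompact hc)

lemma lineDeriv_compactSupport {g : E → ℝ} (hgc : HasCompactSupport g) (η : E) :
    HasCompactSupport (fun x => lineDeriv ℝ g x η) := by
  refine HasCompactSupport.intro hgc (fun x hx => ?_)
  have h : g =ᶠ[𝓝 x] fun _ => (0 : ℝ) := notMem_tsupport_iff_eventuallyEq.1 hx
  rw [Filter.EventuallyEq.lineDeriv_eq (v := η) h]
  simp [lineDeriv]

/-- Difference quotients of a compactly supported Lipschitz function, tested against a locally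
integrable function. -/
lemma tendsto_diffQuot_compact {C : ℝ≥0} {g p : E → ℝ} (hg : LipschitzWith C g)
    (hgc : HasCompactSupport g) (hp : LocallyIntegrable p μ) (v : E) :
    Filter.Tendsto (fun (t : ℝ) ↦ ∫ x, (t⁻¹ • (g (x + t • v) - g x)) * p x ∂μ) (𝓝[>] 0)
      (𝓝 (∫ x, lineDeriv ℝ g x v * p x ∂μ)) := by
  let K := cthickening (‖v‖) (tsupport g)
  have K_compact : IsCompact K := IsCompact.cthickening hgc
  have hpK : Integrable (K.indicator p) μ :=
    (integrable_indicator_iff K_compact.measurableSet).2 (hp.integrableOn_isCompact K_compact)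
  have key := hg.integral_inv_smul_sub_mul_tendsto_integral_lineDeriv_mul hpK v
  have hz : ∀ x ∉ K, ∀ t : ℝ, |t| ≤ 1 → g (x + t • v) = 0 := by
    intro x hx t ht
    rw [← Function.notMem_support]
    contrapose hx
    apply mem_cthickening_of_dist_le _ _ (‖v‖) (tsupport g) (subset_tsupport _ hx)
    simp only [dist_eq_norm, sub_add_cancel_left, norm_neg, norm_smul, Real.norm_eq_abs]
    exact mul_le_of_le_one_left (norm_nonneg v) ht
  have hl : ∀ x ∉ K, lineDeriv ℝ g x v = 0 := by
    intro x hx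
    have : (fun t : ℝ => g (x + t • v)) =ᶠ[𝓝 0] fun _ => (0 : ℝ) := by
      filter_upwards [Metric.ball_mem_nhds (0 : ℝ) one_pos] with t ht
      exact hz x hx t (by simpa using (mem_ball_zero_iff.1 ht).le)
    rw [lineDeriv, this.deriv_eq]; simp
  have e2 : ∫ x, lineDeriv ℝ g x v * K.indicator p x ∂μ = ∫ x, lineDeriv ℝ g x v * p x ∂μ := by
    congr 1; ext x
    by_cases hx : x ∈ K
    · simp [hx]
    · simp [hl x hx]
  rw [e2] at key
  refine key.congr' ?_
  filter_upwards [Ioc_mem_nhdsGT zero_lt_one] with t ht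
  congr 1; ext x
  by_cases hx : x ∈ K
  · simp [hx]
  · have h1 := hz x hx t (by rw [abs_of_pos ht.1]; exact ht.2)
    have h2 := hz x hx 0 (by simp)
    simp only [zero_smul, add_zero] at h2
    simp [h1, h2]

/-- Symmetry of second derivatives in the weak form for Lipschitz functions. -/
lemma integral_lineDeriv_mul_lineDeriv_comm {C D : ℝ≥0} {v g : E → ℝ} (hv : LipschitzWith C v)
    (hg : LipschitzWith D g) (hgc : HasCompactSupport g) (ξ ζ : E) :
    ∫ x, lineDeriv ℝ v x ξ * lineDeriv ℝ g x ζ ∂μ =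
      ∫ x, lineDeriv ℝ v x ζ * lineDeriv ℝ g x ξ ∂μ := by
  have A := tendsto_diffQuot_compact (μ := μ) hg hgc (hv.locallyIntegrable_lineDeriv (μ := μ) ξ) ζ
  have hgi : Integrable (fun x => lineDeriv ℝ g x (-ξ)) μ := by
    have h0 := hg.locallyIntegrable_lineDeriv (μ := μ) (-ξ)
    have : HasCompactSupport (fun x => lineDeriv ℝ g x (-ξ)) := lineDeriv_compactSupport hgc _
    exact locInt_integrable h0 this
  have B := hv.integral_inv_smul_sub_mul_tendsto_integral_lineDeriv_mul hgi (-ζ)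
  have e : ∀ t : ℝ, ∫ x, (t⁻¹ • (g (x + t • ζ) - g x)) * lineDeriv ℝ v x ξ ∂μ =
      ∫ x, (t⁻¹ • (v (x + t • (-ζ)) - v x)) * lineDeriv ℝ g x (-ξ) ∂μ := by
    intro t
    have hgt : LipschitzWith D (fun x => g (x + t • ζ)) := by
      have := hg.comp ((LipschitzWith.id (α := E)).add (LipschitzWith.const (t • ζ)))
      simpa [Function.comp_def] using this
    have hgtc : HasCompactSupport (fun x => g (x + t • ζ)) :=
      hgc.comp_homeomorph (Homeomorph.addRight (t • ζ))
    have I1 := hv.integral_lineDeriv_mul_eq (μ := μ) hg hgc ξ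
    have I2 := hv.integral_lineDeriv_mul_eq (μ := μ) hgt hgtc ξ
    have hld : ∀ x, lineDeriv ℝ (fun x => g (x + t • ζ)) x (-ξ) = lineDeriv ℝ g (x + t • ζ) (-ξ) := by
      intro x
      simp only [lineDeriv]
      congr 1; ext s; congr 1; abel
    have I3 : ∫ x, lineDeriv ℝ g (x + t • ζ) (-ξ) * v x ∂μ =
        ∫ x, lineDeriv ℝ g x (-ξ) * v (x + t • (-ζ)) ∂μ := by
      rw [← integral_add_right_eq_self _ (t • (-ζ))]; simp
    simp only [hld] at I2
    rw [I3] at I2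
    have cv := hv.continuous
    have cg := hg.continuous
    have J1 : Integrable (fun x => lineDeriv ℝ v x ξ * g x) μ := by
      have := (hv.locallyIntegrable_lineDeriv (μ := μ) ξ).integrable_smul_right_of_hasCompactSupport cg hgc
      simpa [smul_eq_mul] using this
    have J2 : Integrable (fun x => lineDeriv ℝ v x ξ * g (x + t • ζ)) μ := by
      have := (hv.locallyIntegrable_lineDeriv (μ := μ) ξ).integrable_smul_right_of_hasCompactSupport
        hgt.continuous hgtc
      simpa [smul_eq_mul] using this
    have hcs : HasCompactSupport (fun x => lineDeriv ℝ g x (-ξ)) := lineDeriv_compactSupport hgc _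
    have J3 : ∀ q : E → ℝ, Continuous q → Integrable (fun x => lineDeriv ℝ g x (-ξ) * q x) μ := by
      intro q hq
      have h1 : LocallyIntegrable (fun x => lineDeriv ℝ g x (-ξ) * q x) μ := by
        rw [← locallyIntegrableOn_univ] at *
        exact LocallyIntegrableOn.mul_continuousOn
          (locallyIntegrableOn_univ.2 (hg.locallyIntegrable_lineDeriv (μ := μ) (-ξ)))
          hq.continuousOn isOpen_univ.isLocallyClosed
      exact locInt_integrable h1 (HasCompactSupport.mul_right hcs)
    have J4 := J3 v cv
    have J5 := J3 (fun x => v (x + t • (-ζ))) (by fun_prop)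
    have E1 : ∀ x, (t⁻¹ • (g (x + t • ζ) - g x)) * lineDeriv ℝ v x ξ =
      t⁻¹ * (lineDeriv ℝ v x ξ * g (x + t • ζ) - lineDeriv ℝ v x ξ * g x) := by
      intro x; simp only [smul_eq_mul]; ring
    have E2 : ∀ x, (t⁻¹ • (v (x + t • (-ζ)) - v x)) * lineDeriv ℝ g x (-ξ) =
      t⁻¹ * (lineDeriv ℝ g x (-ξ) * v (x + t • (-ζ)) - lineDeriv ℝ g x (-ξ) * v x) := by
      intro x; simp only [smul_eq_mul]; ring
    simp only [E1, E2]
    rw [integral_const_mul, integral_const_mul, integral_sub J2 J1, integral_sub J5 J4, I1, I2]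
  simp only [e] at A
  have := tendsto_nhds_unique A B
  rw [show (∫ x, lineDeriv ℝ v x ξ * lineDeriv ℝ g x ζ ∂μ) =
    ∫ x, lineDeriv ℝ g x ζ * lineDeriv ℝ v x ξ ∂μ from by congr 1; ext x; ring, this]
  congr 1; ext x
  rw [lineDeriv_neg, lineDeriv_neg]; ring

/-- The pairing of the `1`-form `u dv` is weakly closed, if `du ∧ dv = 0` a.e. -/
lemma weak_closed {C D P : ℝ≥0} {u v ψ : E → ℝ} (hu : LipschitzWith C u) (hv : LipschitzWith D v)
    (hψ : LipschitzWith P ψ) (hψc : HasCompactSupport ψ)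
    (hw : ∀ᵐ x ∂μ, x ∈ Function.support ψ → ∀ ξ ζ : E,
      lineDeriv ℝ u x ξ * lineDeriv ℝ v x ζ = lineDeriv ℝ u x ζ * lineDeriv ℝ v x ξ) (ξ ζ : E) :
    ∫ x, u x * lineDeriv ℝ v x ξ * lineDeriv ℝ ψ x ζ ∂μ =
      ∫ x, u x * lineDeriv ℝ v x ζ * lineDeriv ℝ ψ x ξ ∂μ := by
  obtain ⟨M, hM⟩ : ∃ M : ℝ≥0, LipschitzWith M (fun x => u x * ψ x) := by
    -- boundedness of `u` on the support
    obtain ⟨R, hR0, hR⟩ : ∃ R > 0, ∀ x, ψ x ≠ 0 → ‖u x‖ ≤ R := by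
      obtain ⟨R, hR⟩ := hψc.isCompact.exists_bound_of_continuousOn hu.continuous.continuousOn
      exact ⟨max R 1, by positivity, fun x hx => (hR x (subset_tsupport _ hx)).trans (le_max_left _ _)⟩
    obtain ⟨S, hS⟩ := hψ.continuous.bounded_above_of_compact_support hψc
    have hS0 : 0 ≤ S := (norm_nonneg _).trans (hS 0)
    refine ⟨⟨S * C + R * P, by positivity⟩, LipschitzWith.of_dist_le_mul ?_⟩
    have main : ∀ x y, ψ y ≠ 0 → |u x * ψ x - u y * ψ y| ≤ (S * C + R * P) * dist x y := by
      intro x y hy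
      have : u x * ψ x - u y * ψ y = (u x - u y) * ψ x + u y * (ψ x - ψ y) := by ring
      rw [this]
      have h1 := hu.dist_le_mul x y
      have h2 := hψ.dist_le_mul x y
      rw [Real.dist_eq] at h1 h2
      have h3 := hS x
      have h4 := hR y hy
      rw [Real.norm_eq_abs] at h3 h4
      calc _ ≤ |u x - u y| * |ψ x| + |u y| * |ψ x - ψ y| := by
            rw [← abs_mul, ← abs_mul]; exact abs_add_le _ _
        _ ≤ (C * dist x y) * S + R * (P * dist x y) := by gcongr
        _ = _ := by ring
    intro x y
    rw [Real.dist_eq]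
    by_cases hy : ψ y = 0
    · by_cases hx : ψ x = 0
      · simp only [hx, hy, mul_zero, sub_self, abs_zero]
        exact mul_nonneg (NNReal.coe_nonneg _) dist_nonneg
      · rw [abs_sub_comm, dist_comm]; exact main y x hx
    · exact main x y hy
  have hgc : HasCompactSupport (fun x => u x * ψ x) := hψc.mul_left
  have key := integral_lineDeriv_mul_lineDeriv_comm (μ := μ) hv hM hgc ξ ζ
  have prod : ∀ η, ∀ᵐ x ∂μ, lineDeriv ℝ (fun x => u x * ψ x) x η =
      u x * lineDeriv ℝ ψ x η + ψ x * lineDeriv ℝ u x η := by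
    intro η
    filter_upwards [hu.ae_lineDifferentiableAt (μ := μ) η, hψ.ae_lineDifferentiableAt (μ := μ) η]
      with x h1 h2
    have h1' : HasDerivAt (fun t : ℝ => u (x + t • η)) (lineDeriv ℝ u x η) 0 := h1.hasLineDerivAt
    have h2' : HasDerivAt (fun t : ℝ => ψ (x + t • η)) (lineDeriv ℝ ψ x η) 0 := h2.hasLineDerivAt
    have := (h1'.mul h2').deriv
    simp only [zero_smul, add_zero] at this
    rw [lineDeriv]
    rw [show (fun t : ℝ => u (x + t • η) * ψ (x + t • η)) =
      (fun t : ℝ => u (x + t • η)) * (fun t : ℝ => ψ (x + t • η)) from rfl, this]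
    ring
  have hlc : ∀ η, HasCompactSupport (fun x => lineDeriv ℝ ψ x η) := fun η =>
    lineDeriv_compactSupport hψc η
  have bdd : ∀ a b q : E → ℝ, MemLp a ⊤ μ → MemLp b ⊤ μ → Continuous q →
      (HasCompactSupport (fun x => q x * a x * b x)) → Integrable (fun x => q x * a x * b x) μ := by
    intro a b q ha hb hq hc
    have hab : MemLp (a * b) ⊤ μ := hb.mul ha
    have h1 : LocallyIntegrable (fun x => q x * (a * b) x) μ := by
      have := LocallyIntegrableOn.continuousOn_mul
          (locallyIntegrableOn_univ.2 (hab.locallyIntegrable le_top))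
          hq.continuousOn isOpen_univ.isLocallyClosed
      exact locallyIntegrableOn_univ.1 this
    have h2 : LocallyIntegrable (fun x => q x * a x * b x) μ := by
      refine h1.congr (.of_forall fun x => ?_)
      simp [mul_assoc]
    exact locInt_integrable h2 hc
  have I1 : ∀ η η', Integrable (fun x => u x * lineDeriv ℝ v x η * lineDeriv ℝ ψ x η') μ :=
    fun η η' => bdd _ _ _ (hv.memLp_lineDeriv η) (hψ.memLp_lineDeriv η') hu.continuous
      ((hlc η').mul_left)
  have I2 : ∀ η η', Integrable (fun x => ψ x * lineDeriv ℝ v x η * lineDeriv ℝ u x η') μ :=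
    fun η η' => bdd _ _ _ (hv.memLp_lineDeriv η) (hu.memLp_lineDeriv η') hψ.continuous
      (HasCompactSupport.mul_right (HasCompactSupport.mul_right hψc))
  have expand : ∀ η η', ∫ x, lineDeriv ℝ v x η * lineDeriv ℝ (fun x => u x * ψ x) x η' ∂μ =
      (∫ x, u x * lineDeriv ℝ v x η * lineDeriv ℝ ψ x η' ∂μ) +
      ∫ x, ψ x * lineDeriv ℝ v x η * lineDeriv ℝ u x η' ∂μ := by
    intro η η'
    rw [← integral_add (I1 η η') (I2 η η')]
    apply integral_congr_ae
    filter_upwards [prod η'] with x hx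
    rw [hx]; ring
  rw [expand, expand] at key
  have last : ∫ x, ψ x * lineDeriv ℝ v x ξ * lineDeriv ℝ u x ζ ∂μ =
      ∫ x, ψ x * lineDeriv ℝ v x ζ * lineDeriv ℝ u x ξ ∂μ := by
    apply integral_congr_ae
    filter_upwards [hw] with x hx
    by_cases h : ψ x = 0
    · simp [h]
    · have := hx h ξ ζ
      linear_combination (-ψ x) * this
  linarith

end Closed

section LocalPrim

variable {E : Type*} [NormedAddCommGroup E] [NormedSpace ℝ E]
  [MeasurableSpace E] [BorelSpace E] [FiniteDimensional ℝ E]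
  {μ : Measure E} [μ.IsAddHaarMeasure]

lemma locInt_field {D : ℝ≥0} {v q : E → ℝ} (hv : LipschitzWith D v) (hq : Continuous q) :
    LocallyIntegrable (fun y => q y • fderiv ℝ v y) μ := by
  have h1 : MemLp (fun y => fderiv ℝ v y) ⊤ μ := by
    refine memLp_top_of_bound (measurable_fderiv ℝ v).aestronglyMeasurable D
      (.of_forall fun x => norm_fderiv_le_of_lipschitz ℝ hv)
  exact (h1.locallyIntegrable le_top).continuous_smul hq

lemma conv_field_apply {D : ℝ≥0} {v q φ : E → ℝ} (hv : LipschitzWith D v) (hq : Continuous q)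
    (hφ : Continuous φ) (hφc : HasCompactSupport φ) (p ξ : E) :
    (convolution φ (fun y => q y • fderiv ℝ v y) (ContinuousLinearMap.lsmul ℝ ℝ) μ p) ξ =
      ∫ y, φ (p - y) * (q y * fderiv ℝ v y ξ) ∂μ := by
  have hex := hφc.convolutionExists_left (L := ContinuousLinearMap.lsmul ℝ ℝ (E := E →L[ℝ] ℝ))
    hφ (locInt_field (μ := μ) hv hq) p
  have hInteg : Integrable (fun t => (ContinuousLinearMap.lsmul ℝ ℝ (E := E →L[ℝ] ℝ)) (φ t)
      ((fun y => q y • fderiv ℝ v y) (p - t))) μ := hex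
  rw [convolution, ContinuousLinearMap.integral_apply hInteg]
  rw [← integral_sub_left_eq_self _ μ p]
  simp only [sub_sub_cancel, ContinuousLinearMap.lsmul_apply, smul_apply, smul_eq_mul]

lemma lip_reflect {P : ℝ≥0} {φ : E → ℝ} (hP : LipschitzWith P φ) (p : E) :
    LipschitzWith P (fun y => φ (p - y)) := by
  refine LipschitzWith.of_dist_le_mul fun x y => ?_
  have := hP.dist_le_mul (p - x) (p - y)
  rwa [dist_sub_left] at this

lemma fderiv_conv_field {D : ℝ≥0} {v q φ : E → ℝ} (hv : LipschitzWith D v) (hq : Continuous q)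
    (hφ : ContDiff ℝ 1 φ) (hφc : HasCompactSupport φ) (p : E) :
    ∃ A : E →L[ℝ] E →L[ℝ] ℝ,
      HasFDerivAt (convolution φ (fun y => q y • fderiv ℝ v y)
        (ContinuousLinearMap.lsmul ℝ ℝ) μ) A p ∧
      ∀ ζ ξ, A ζ ξ = ∫ y, fderiv ℝ φ (p - y) ζ * (q y * fderiv ℝ v y ξ) ∂μ := by
  have h := hφc.hasFDerivAt_convolution_left (ContinuousLinearMap.lsmul ℝ ℝ (E := E →L[ℝ] ℝ))
    hφ (locInt_field (μ := μ) hv hq) p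
  refine ⟨_, h, fun ζ ξ => ?_⟩
  have hex := HasCompactSupport.convolutionExists_left (𝕜 := ℝ) (μ := μ) (F := E →L[ℝ] E →L[ℝ] ℝ)
    ((ContinuousLinearMap.lsmul ℝ ℝ (E := E →L[ℝ] ℝ)).precompL E) (hφc.fderiv (𝕜 := ℝ))
    (hφ.continuous_fderiv (by norm_num)) (locInt_field (μ := μ) hv hq) p
  have hInteg : Integrable (fun t => ((ContinuousLinearMap.lsmul ℝ ℝ (E := E →L[ℝ] ℝ)).precompL E)
      (fderiv ℝ φ t) ((fun y => q y • fderiv ℝ v y) (p - t))) μ := hex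
  rw [convolution, ContinuousLinearMap.integral_apply hInteg,
    ContinuousLinearMap.integral_apply (hInteg.apply_continuousLinearMap ζ)]
  rw [← integral_sub_left_eq_self _ μ p]
  simp [ContinuousLinearMap.precompL_apply, mul_left_comm]

lemma lineDeriv_reflect {φ : E → ℝ} (hφ : ContDiff ℝ 1 φ) (p y ζ : E) :
    lineDeriv ℝ (fun y => φ (p - y)) y ζ = - fderiv ℝ φ (p - y) ζ := by
  have h1 : HasFDerivAt φ (fderiv ℝ φ (p - y)) (p - y) :=
    (hφ.differentiable (by norm_num) _).hasFDerivAt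
  have h2 : HasFDerivAt (fun y : E => p - y) (-(ContinuousLinearMap.id ℝ E)) y :=
    (hasFDerivAt_id y).const_sub p
  have h3 := h1.comp y h2
  have := h3.hasLineDerivAt ζ
  have := this.lineDeriv
  simpa [Function.comp_def] using this

lemma conv_scalar_hasFDerivAt {D : ℝ≥0} {v φ : E → ℝ} (hv : LipschitzWith D v)
    (hφ : ContDiff ℝ 1 φ) (hφc : HasCompactSupport φ) (p : E) :
    HasFDerivAt (convolution φ v (ContinuousLinearMap.lsmul ℝ ℝ) μ)
      (convolution φ (fun y => (1 : ℝ) • fderiv ℝ v y) (ContinuousLinearMap.lsmul ℝ ℝ) μ p) p := by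
  have h := hφc.hasFDerivAt_convolution_left (ContinuousLinearMap.lsmul ℝ ℝ (E := ℝ))
    hφ hv.continuous.locallyIntegrable (μ := μ) p
  refine h.congr_fderiv ?_
  ext ξ
  symm
  rw [conv_field_apply (q := fun _ => (1 : ℝ)) hv continuous_const hφ.continuous hφc]
  have hex := (hφc.fderiv (𝕜 := ℝ)).convolutionExists_left
    (L := (ContinuousLinearMap.lsmul ℝ ℝ (E := ℝ)).precompL E)
    (hφ.continuous_fderiv (by norm_num)) (hv.continuous.locallyIntegrable (μ := μ)) p
  have hInteg : Integrable (fun t => ((ContinuousLinearMap.lsmul ℝ ℝ (E := ℝ)).precompL E)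
      (fderiv ℝ φ t) (v (p - t))) μ := hex
  rw [convolution, ContinuousLinearMap.integral_apply hInteg]
  rw [← integral_sub_left_eq_self (fun t => (((ContinuousLinearMap.lsmul ℝ ℝ (E := ℝ)).precompL E)
      (fderiv ℝ φ t) (v (p - t))) ξ) μ p]
  simp only [ContinuousLinearMap.precompL_apply, sub_sub_cancel, ContinuousLinearMap.lsmul_apply,
    smul_eq_mul, one_mul]
  obtain ⟨P, hP⟩ := hφ.lipschitzWith_of_hasCompactSupport hφc (by norm_num)
  have hψ : LipschitzWith P (fun y => φ (p - y)) := lip_reflect hP p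
  have hψc : HasCompactSupport (fun y => φ (p - y)) :=
    hφc.comp_homeomorph (Homeomorph.subLeft p)
  have := hv.integral_lineDeriv_mul_eq (μ := μ) hψ hψc ξ
  simp only [lineDeriv_reflect hφ, map_neg, neg_neg] at this
  rw [← this]
  apply integral_congr_ae
  filter_upwards [hv.ae_differentiableAt (μ := μ)] with y hy
  rw [hy.lineDeriv_eq_fderiv, mul_comm]

lemma local_prim_smooth {C D : ℝ≥0} {u v : E → ℝ} (hu : LipschitzWith C u)
    (hv : LipschitzWith D v) {c : E} {r : ℝ}
    (hw : ∀ᵐ x ∂μ, x ∈ ball c (2 * r) → ∀ ξ ζ : E,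
      fderiv ℝ u x ξ * fderiv ℝ v x ζ = fderiv ℝ u x ζ * fderiv ℝ v x ξ)
    {δ : ℝ} (hδ : 0 < δ) (hδr : δ ≤ r) :
    ∃ W : E → ℝ, ∀ y ∈ ball c r, ∀ z ∈ ball c r, |W z - W y - u y * (v z - v y)| ≤
      C * D * ‖z - y‖ * (‖z - y‖ + δ) + |u y| * (2 * D * δ) := by
  let b : ContDiffBump (0 : E) := ⟨δ / 2, δ, by positivity, by linarith⟩
  set φ := b.normed μ with hφdef
  have hφ1 : ContDiff ℝ 1 φ := b.contDiff_normed
  have hφc : HasCompactSupport φ := b.hasCompactSupport_normed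
  have hφsupp : ∀ x, φ x ≠ 0 → ‖x‖ < δ := by
    intro x hx
    have : x ∈ Function.support φ := hx
    rw [hφdef, b.support_normed_eq] at this
    simpa using this
  obtain ⟨P, hP⟩ := hφ1.lipschitzWith_of_hasCompactSupport hφc (by norm_num)
  set ω := convolution φ (fun y => u y • fderiv ℝ v y) (ContinuousLinearMap.lsmul ℝ ℝ) μ with hω
  have hA := fun p => fderiv_conv_field (μ := μ) hv hu.continuous hφ1 hφc p
  have closed : ∀ p ∈ ball c r, ∀ x y, fderiv ℝ ω p x y = fderiv ℝ ω p y x := by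
    intro p hp ζ ξ
    obtain ⟨A, hA1, hA2⟩ := hA p
    rw [hA1.fderiv, hA2, hA2]
    have hψ : LipschitzWith P (fun y => φ (p - y)) := lip_reflect hP p
    have hψc : HasCompactSupport (fun y => φ (p - y)) :=
      hφc.comp_homeomorph (Homeomorph.subLeft p)
    have := weak_closed (μ := μ) hu hv hψ hψc (by
      filter_upwards [hw, hu.ae_differentiableAt (μ := μ), hv.ae_differentiableAt (μ := μ)]
        with y h1 h2 h3 hy ξ ζ
      have hyb : y ∈ ball c (2 * r) := by
        have h4 := hφsupp _ hy
        rw [mem_ball, dist_eq_norm] at hp ⊢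
        calc ‖y - c‖ = ‖(p - c) - (p - y)‖ := by congr 1; abel
          _ ≤ ‖p - c‖ + ‖p - y‖ := norm_sub_le _ _
          _ < 2 * r := by linarith
      rw [h2.lineDeriv_eq_fderiv, h3.lineDeriv_eq_fderiv, h2.lineDeriv_eq_fderiv,
        h3.lineDeriv_eq_fderiv]
      exact h1 hyb ξ ζ) ξ ζ
    simp only [lineDeriv_reflect hφ1] at this
    have e : ∀ α β : E, ∫ y, fderiv ℝ φ (p - y) α * (u y * fderiv ℝ v y β) ∂μ =
        - ∫ y, u y * lineDeriv ℝ v y β * - fderiv ℝ φ (p - y) α ∂μ := by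
      intro α β
      rw [← integral_neg]
      apply integral_congr_ae
      filter_upwards [hv.ae_differentiableAt (μ := μ)] with y hy
      rw [hy.lineDeriv_eq_fderiv]; ring
    rw [e, e, this]
  obtain ⟨W, hW⟩ := (convex_ball c r).exists_forall_hasFDerivAt_of_fderiv_symmetric isOpen_ball
    (ω := ω) (fun p _ => by
      obtain ⟨A, hA1, hA2⟩ := hA p
      exact hA1.differentiableAt.differentiableWithinAt) closed
  refine ⟨W, fun y hy z hz => ?_⟩
  set V := convolution φ v (ContinuousLinearMap.lsmul ℝ ℝ) μ with hV
  have hVv : ∀ x, |V x - v x| ≤ D * δ := by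
    intro x
    have := b.dist_normed_convolution_le (μ := μ) (g := v) (x₀ := x) (ε := D * δ)
      hv.continuous.aestronglyMeasurable (fun z hz => by
        refine (hv.dist_le_mul z x).trans ?_
        gcongr
        exact (mem_ball.1 hz).le)
    simpa [Real.dist_eq] using this
  have hInteg1 : ∫ t, φ t ∂μ = 1 := b.integral_normed
  have bound : ∀ p ∈ segment ℝ y z, ‖ω p - u y • convolution φ (fun y => (1 : ℝ) • fderiv ℝ v y)
      (ContinuousLinearMap.lsmul ℝ ℝ) μ p‖ ≤ C * D * (‖z - y‖ + δ) := by
    intro p hp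
    have hpy : ‖p - y‖ ≤ ‖z - y‖ := by
      have := norm_sub_le_of_mem_segment hp
      exact this
    refine ContinuousLinearMap.opNorm_le_bound _ (by positivity) (fun ξ => ?_)
    simp only [sub_apply, smul_apply]
    rw [hω, conv_field_apply hv hu.continuous hφ1.continuous hφc,
      conv_field_apply (q := fun _ => (1 : ℝ)) hv continuous_const hφ1.continuous hφc,
      smul_eq_mul, ← integral_const_mul, ← integral_sub]
    · calc _ ≤ ∫ t, φ (p - t) * (C * D * (‖z - y‖ + δ) * ‖ξ‖) ∂μ := by
            apply norm_integral_le_of_norm_le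
            · apply Integrable.mul_const
              exact (hφ1.continuous.integrable_of_hasCompactSupport hφc).comp_sub_left p
            · refine .of_forall fun t => ?_
              have e : φ (p - t) * (u t * fderiv ℝ v t ξ) -
                u y * (φ (p - t) * (1 * fderiv ℝ v t ξ)) =
                φ (p - t) * ((u t - u y) * fderiv ℝ v t ξ) := by ring
              rw [e]
              have hn : 0 ≤ φ (p - t) := b.nonneg_normed _
              rw [norm_mul, Real.norm_of_nonneg hn]
              by_cases h0 : φ (p - t) = 0
              · simp [h0]
              gcongr
              have h1 := hu.dist_le_mul t y
              rw [dist_eq_norm, dist_eq_norm] at h1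
              have h2 : ‖t - y‖ ≤ ‖z - y‖ + δ := by
                have := hφsupp _ h0
                calc ‖t - y‖ = ‖(p - y) - (p - t)‖ := by congr 1; abel
                  _ ≤ ‖p - y‖ + ‖p - t‖ := norm_sub_le _ _
                  _ ≤ _ := by linarith
              rw [norm_mul]
              calc _ ≤ (C * (‖z - y‖ + δ)) * (D * ‖ξ‖) := by
                    gcongr
                    · exact h1.trans (by gcongr)
                    · exact (ContinuousLinearMap.le_opNorm _ _).trans
                        (by gcongr; exact norm_fderiv_le_of_lipschitz ℝ hv)
                _ = _ := by ring
        _ = C * D * (‖z - y‖ + δ) * ‖ξ‖ := by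
            rw [integral_mul_const, integral_sub_left_eq_self φ μ p, hInteg1, one_mul]
    · have hex := hφc.convolutionExists_left (L := ContinuousLinearMap.lsmul ℝ ℝ (E := E →L[ℝ] ℝ))
        hφ1.continuous (locInt_field (μ := μ) hv hu.continuous) p
      have h2 := (Integrable.apply_continuousLinearMap (μ := μ) hex ξ).comp_sub_left p
      simpa [mul_left_comm] using h2
    · have hex := hφc.convolutionExists_left (L := ContinuousLinearMap.lsmul ℝ ℝ (E := E →L[ℝ] ℝ))
        hφ1.continuous (locInt_field (μ := μ) (q := fun _ => (1 : ℝ)) hv continuous_const) p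
      have h2 := (Integrable.apply_continuousLinearMap (μ := μ) hex ξ).comp_sub_left p
      have h3 := h2.const_mul (u y)
      simpa using h3
  have seg : segment ℝ y z ⊆ ball c r := (convex_ball c r).segment_subset hy hz
  have mv := (convex_segment y z).norm_image_sub_le_of_norm_hasFDerivWithin_le
    (f := fun p => W p - u y • V p) (C := C * D * (‖z - y‖ + δ))
    (fun p hp => ((hW p (seg hp)).sub
      ((conv_scalar_hasFDerivAt (μ := μ) hv hφ1 hφc p).const_smul (u y))).hasFDerivWithinAt)
    bound (left_mem_segment ℝ y z) (right_mem_segment ℝ y z)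
  simp only [smul_eq_mul, Real.norm_eq_abs] at mv
  have e : W z - W y - u y * (v z - v y) = (W z - u y * V z - (W y - u y * V y)) +
    u y * ((V z - v z) - (V y - v y)) := by ring
  rw [e]
  have t1 := abs_add_le (W z - u y * V z - (W y - u y * V y)) (u y * ((V z - v z) - (V y - v y)))
  have t2 : |u y * ((V z - v z) - (V y - v y))| ≤ |u y| * (2 * D * δ) := by
    rw [abs_mul]
    gcongr
    have := abs_sub (V z - v z) (V y - v y)
    have h1 := hVv z
    have h2 := hVv y
    linarith
  calc _ ≤ _ := t1
    _ ≤ C * D * (‖z - y‖ + δ) * ‖z - y‖ + |u y| * (2 * D * δ) := add_le_add mv t2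
    _ = _ := by ring

/-- Local primitive of `u dv`. -/
lemma local_prim {C D : ℝ≥0} {u v : E → ℝ} (hu : LipschitzWith C u)
    (hv : LipschitzWith D v) {c : E} {r : ℝ} (hr : 0 < r)
    (hw : ∀ᵐ x ∂μ, x ∈ ball c (2 * r) → ∀ ξ ζ : E,
      fderiv ℝ u x ξ * fderiv ℝ v x ζ = fderiv ℝ u x ζ * fderiv ℝ v x ξ) :
    ∃ W : E → ℝ, ∀ y ∈ ball c r, ∀ z ∈ ball c r, |W z - W y - u y * (v z - v y)| ≤
      C * D * ‖z - y‖ ^ 2 := by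
  have hk : ∀ k : ℕ, 0 < r / (k + 1) := fun k => by positivity
  have hk' : ∀ k : ℕ, r / (k + 1) ≤ r := fun k => by
    apply div_le_self hr.le
    have : (0 : ℝ) ≤ k := Nat.cast_nonneg k
    linarith
  choose W hW using fun k : ℕ => local_prim_smooth hu hv hw (hk k) (hk' k)
  have hc : c ∈ ball c r := mem_ball_self hr
  have lim : ∀ z ∈ ball c r, ∃ l, Filter.Tendsto (fun k => W k z - W k c)
      (Filter.hyperfilter ℕ : Filter ℕ) (𝓝 l) := by
    intro z hz
    let M := C * D * ‖z - c‖ * (‖z - c‖ + r) + |u c| * (2 * D * r) + |u c * (v z - v c)|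
    have hM : ∀ k, W k z - W k c ∈ Icc (-M) M := by
      intro k
      have h1 := hW k c hc z hz
      have h2 : C * D * ‖z - c‖ * (‖z - c‖ + r / (k + 1)) + |u c| * (2 * D * (r / (k + 1))) ≤
        C * D * ‖z - c‖ * (‖z - c‖ + r) + |u c| * (2 * D * r) := by
        have := hk' k
        gcongr
      rw [Set.mem_Icc, ← abs_le]
      calc |W k z - W k c| = |(W k z - W k c - u c * (v z - v c)) + u c * (v z - v c)| := by
            congr 1; ring
        _ ≤ _ := abs_add_le _ _
        _ ≤ M := by simp only [M]; linarith
    obtain ⟨l, -, hl⟩ := isCompact_Icc.ultrafilter_le_nhds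
      ((Filter.hyperfilter ℕ).map (fun k => W k z - W k c))
      (by
        rw [Filter.le_principal_iff]
        rw [Ultrafilter.coe_map]
        exact Filter.mem_map.2 (Filter.univ_mem' hM))
    exact ⟨l, hl⟩
  choose! w hw' using lim
  refine ⟨w, fun y hy z hz => ?_⟩
  have hδ : Filter.Tendsto (fun k : ℕ => r / ((k : ℝ) + 1)) (Filter.hyperfilter ℕ : Filter ℕ)
      (𝓝 0) := by
    have : Filter.Tendsto (fun k : ℕ => r / ((k : ℝ) + 1)) Filter.atTop (𝓝 0) :=
      by simpa [div_eq_mul_inv] using (tendsto_one_div_add_atTop_nhds_zero_nat (𝕜 := ℝ)).const_mul r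
    exact this.mono_left Nat.hyperfilter_le_atTop
  have L1 := ((((hw' z hz).sub (hw' y hy)).sub_const (u y * (v z - v y))).abs)
  have L2 : Filter.Tendsto (fun k : ℕ => C * D * ‖z - y‖ * (‖z - y‖ + r / ((k : ℝ) + 1)) +
      |u y| * (2 * D * (r / ((k : ℝ) + 1)))) (Filter.hyperfilter ℕ : Filter ℕ)
      (𝓝 (C * D * ‖z - y‖ * (‖z - y‖ + 0) + |u y| * (2 * D * 0))) :=
    ((hδ.const_add _).const_mul _).add ((hδ.const_mul _).const_mul _)
  have := le_of_tendsto_of_tendsto' L1 L2 (fun k => by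
    have h1 := hW k y hy z hz
    rw [show W k z - W k c - (W k y - W k c) = W k z - W k y by ring]
    exact h1)
  calc _ ≤ _ := this
    _ = _ := by ring

end LocalPrim

section Glue

/-- The reals with the discrete topology. -/
structure DiscReal : Type where
  /-- the underlying real -/
  val : ℝ

instance : TopologicalSpace DiscReal := ⊥

instance : DiscreteTopology DiscReal := ⟨rfl⟩

lemma continuousAt_disc_iff {X Y : Type*} [TopologicalSpace X] [TopologicalSpace Y]
    [DiscreteTopology Y] {f : X → Y} {x : X} : ContinuousAt f x ↔ ∀ᶠ y in 𝓝 x, f y = f x := by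
  unfold ContinuousAt
  rw [nhds_discrete Y, Filter.tendsto_pure]

/-- The core of the covering space of germs of local primitives. -/
noncomputable def germCore {X : Type*} [TopologicalSpace X] (B : X → Set X) (hB : ∀ i, IsOpen (B i))
    (hm : ∀ i, i ∈ B i) (W : X → X → ℝ)
    (hW : ∀ i j x, x ∈ B i → x ∈ B j → ∀ᶠ y in 𝓝 x, W i y - W j y = W i x - W j x) :
    FiberBundleCore X X DiscReal where
  baseSet := B
  isOpen_baseSet := hB
  indexAt := id
  mem_baseSet_at := hm
  coordChange i j x c := ⟨c.val + (W i x - W j x)⟩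
  coordChange_self := by
    intro i x _ v
    simp
  continuousOn_coordChange := by
    intro i j p hp
    apply ContinuousAt.continuousWithinAt
    rw [continuousAt_disc_iff]
    have h1 : ∀ᶠ q : X × DiscReal in 𝓝 p, W i q.1 - W j q.1 = W i p.1 - W j p.1 :=
      continuousAt_fst.eventually (hW i j p.1 hp.1.1 hp.1.2)
    have h2 : ∀ᶠ q : X × DiscReal in 𝓝 p, q.2 = p.2 :=
      continuousAt_disc_iff.1 continuousAt_snd
    filter_upwards [h1, h2] with q h1 h2
    rw [h1, h2]
  coordChange_comp := by
    intro i j k x _ v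
    simp only [DiscReal.mk.injEq]
    ring

/-- Gluing of local functions which differ by locally constant ones. -/
lemma glue_simply_connected {X : Type*} [TopologicalSpace X] [SimplyConnectedSpace X]
    [LocallyPathConnectedSpace X] (B : X → Set X) (hB : ∀ i, IsOpen (B i))
    (hm : ∀ i, i ∈ B i) (W : X → X → ℝ)
    (hW : ∀ i j x, x ∈ B i → x ∈ B j → ∀ᶠ y in 𝓝 x, W i y - W j y = W i x - W j x) :
    ∃ w : X → ℝ, ∀ i, ∀ x ∈ B i, ∀ᶠ y in 𝓝 x, w y - W i y = w x - W i x := by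
  let Z := germCore B hB hm W hW
  have cov : IsCoveringMap (Bundle.TotalSpace.proj : Bundle.TotalSpace DiscReal Z.Fiber → X) :=
    FiberBundle.isCoveringMap
  obtain ⟨x₀⟩ : Nonempty X := inferInstance
  obtain ⟨s, ⟨-, hs⟩, -⟩ := cov.existsUnique_continuousMap_lifts (ContinuousMap.id X) x₀
    (⟨x₀, (⟨0⟩ : DiscReal)⟩ : Bundle.TotalSpace DiscReal Z.Fiber) rfl
  have hs' : ∀ x, (s x).1 = x := fun x => congrFun hs x
  let σ : X → ℝ := fun y => DiscReal.val (s y).2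
  have hc : ∀ i y, ((Z.localTriv i) (s y)).2.val = σ y + (W y y - W i y) := by
    intro i y
    have : ((Z.localTriv i) (s y)).2.val = σ y + (W (s y).1 (s y).1 - W i (s y).1) := rfl
    rw [this, hs' y]
  refine ⟨fun y => W y y + σ y, fun i x hx => ?_⟩
  have hw : ∀ y, (W y y + σ y) - W i y = ((Z.localTriv i) (s y)).2.val := by
    intro y
    rw [hc]; ring
  have hcont : ContinuousAt (fun y => ((Z.localTriv i) (s y)).2) x := by
    have h1 : ContinuousAt (Z.localTriv i) (s x) := by
      apply (Z.localTriv i).toOpenPartialHomeomorph.continuousAt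
      show (s x).1 ∈ B i
      rw [hs']; exact hx
    have h2 : ContinuousAt (fun y => (Z.localTriv i) (s y)) x :=
      h1.comp s.continuous.continuousAt
    exact continuousAt_snd.comp h2
  filter_upwards [continuousAt_disc_iff.1 hcont] with y hy
  rw [hw, hw, hy]

end Glue

section GlobalPrim

variable {E : Type*} [NormedAddCommGroup E] [NormedSpace ℝ E]
  [MeasurableSpace E] [BorelSpace E] [FiniteDimensional ℝ E]
  {μ : Measure E} [μ.IsAddHaarMeasure]

/-- `dw = u dv` on `B`, in a quadratic sense. -/
def QuadPrim (u v w : E → ℝ) (B : Set E) : Prop :=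
  ∃ C : ℝ, ∀ y ∈ B, ∀ z ∈ B, |w z - w y - u y * (v z - v y)| ≤ C * ‖z - y‖ ^ 2

lemma quad_const {B : Set E} (hB : IsOpen B) (hBc : IsPreconnected B) {g : E → ℝ}
    (hg : ∀ x ∈ B, ∃ C : ℝ, ∀ᶠ z in 𝓝 x, |g z - g x| ≤ C * ‖z - x‖ ^ 2) :
    ∀ y ∈ B, ∀ z ∈ B, g y = g z := by
  have hd : ∀ x ∈ B, HasFDerivAt g (0 : E →L[ℝ] ℝ) x := by
    intro x hx
    obtain ⟨C, hC⟩ := hg x hx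
    rw [hasFDerivAt_iff_isLittleO]
    have h1 : (fun z => g z - g x - (0 : E →L[ℝ] ℝ) (z - x)) =O[𝓝 x] fun z => ‖z - x‖ ^ 2 := by
      refine Asymptotics.IsBigO.of_bound C ?_
      filter_upwards [hC] with z hz
      simpa using hz
    refine h1.trans_isLittleO ?_
    have h2 : (fun z : E => ‖z - x‖ ^ 2) =o[𝓝 x] fun z => ‖z - x‖ ^ 1 := by
      refine (Asymptotics.isLittleO_pow_pow (m := 1) (n := 2) (by norm_num)).comp_tendsto ?_
      have : Filter.Tendsto (fun z : E => ‖z - x‖) (𝓝 x) (𝓝 ‖x - x‖) :=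
        (continuous_norm.comp (continuous_id.sub continuous_const)).tendsto x
      simpa using this
    simp only [pow_one] at h2
    exact Asymptotics.isLittleO_norm_right.1 h2
  intro y hy z hz
  exact hB.is_const_of_fderiv_eq_zero hBc
    (fun x hx => (hd x hx).differentiableAt.differentiableWithinAt)
    (fun x hx => (hd x hx).fderiv) hy hz

lemma QuadPrim.mono {u v w : E → ℝ} {B B' : Set E} (h : QuadPrim u v w B) (hs : B' ⊆ B) :
    QuadPrim u v w B' := by
  obtain ⟨C, hC⟩ := h
  exact ⟨C, fun y hy z hz => hC y (hs hy) z (hs hz)⟩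

lemma local_prim' {Ω : Set E} {u v : E → ℝ} (hu : LocLipOn u Ω) (hv : LocLipOn v Ω)
    (hw : ∀ᵐ x ∂μ, x ∈ Ω → ∀ ξ ζ : E,
      fderiv ℝ u x ξ * fderiv ℝ v x ζ = fderiv ℝ u x ζ * fderiv ℝ v x ξ) (x : E) (hx : x ∈ Ω) :
    ∃ r > 0, ball x r ⊆ Ω ∧ ∃ W, QuadPrim u v W (ball x r) := by
  obtain ⟨r₁, hr₁, hb₁, K₁, hK₁⟩ := hu x hx
  obtain ⟨r₂, hr₂, hb₂, K₂, hK₂⟩ := hv x hx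
  obtain ⟨u', hu', eu⟩ := hK₁.extend_real
  obtain ⟨v', hv', ev⟩ := hK₂.extend_real
  set r := min r₁ r₂ / 2 with hr
  have hr0 : 0 < r := by positivity
  have s1 : ball x (2 * r) ⊆ ball x r₁ := ball_subset_ball (by
    have := min_le_left r₁ r₂; linarith)
  have s2 : ball x (2 * r) ⊆ ball x r₂ := ball_subset_ball (by
    have := min_le_right r₁ r₂; linarith)
  have s3 : ball x r ⊆ ball x (2 * r) := ball_subset_ball (by linarith)
  refine ⟨r, hr0, (s3.trans s1).trans hb₁, ?_⟩
  obtain ⟨W, hW⟩ := local_prim (μ := μ) hu' hv' (c := x) hr0 (by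
    filter_upwards [hw] with y hy hyb ξ ζ
    have e1 : fderiv ℝ u y = fderiv ℝ u' y := by
      apply Filter.EventuallyEq.fderiv_eq
      filter_upwards [isOpen_ball.mem_nhds (s1 hyb)] with z hz using eu hz
    have e2 : fderiv ℝ v y = fderiv ℝ v' y := by
      apply Filter.EventuallyEq.fderiv_eq
      filter_upwards [isOpen_ball.mem_nhds (s2 hyb)] with z hz using ev hz
    rw [← e1, ← e2]
    exact hy (hb₁ (s1 hyb)) ξ ζ)
  refine ⟨W, K₁ * K₂, fun y hy z hz => ?_⟩
  have := hW y hy z hz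
  rwa [← eu (s1 (s3 hy)), ← ev (s2 (s3 hy)), ← ev (s2 (s3 hz))] at this

/-- Global primitive on a simply connected open set. -/
lemma global_prim {Ω : Set E} (hΩ : IsOpen Ω) (hsc : SimplyConnectedSpace ↥Ω)
    {u v : E → ℝ} (hu : LocLipOn u Ω) (hv : LocLipOn v Ω)
    (hw : ∀ᵐ x ∂μ, x ∈ Ω → ∀ ξ ζ : E,
      fderiv ℝ u x ξ * fderiv ℝ v x ζ = fderiv ℝ u x ζ * fderiv ℝ v x ξ) :
    ∃ w : E → ℝ, ∀ x ∈ Ω, ∃ r > 0, ball x r ⊆ Ω ∧ QuadPrim u v w (ball x r) := by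
  choose r hr hb W hW using fun x : Ω => local_prim' hu hv hw x.1 x.2
  have : LocallyPathConnectedSpace ↥Ω := hΩ.locallyPathConnectedSpace
  have const : ∀ (i j : Ω) (x : E), x ∈ ball (i : E) (r i) → x ∈ ball (j : E) (r j) →
      ∀ y ∈ ball (i : E) (r i) ∩ ball (j : E) (r j), W i y - W j y = W i x - W j x := by
    intro i j x hxi hxj y hy
    refine quad_const (g := fun y => W i y - W j y)
      (B := ball (i : E) (r i) ∩ ball (j : E) (r j)) (isOpen_ball.inter isOpen_ball)
      ((convex_ball _ _).inter (convex_ball _ _)).isPreconnected ?_ y hy x ⟨hxi, hxj⟩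
    intro p hp
    obtain ⟨C₁, h₁⟩ := hW i
    obtain ⟨C₂, h₂⟩ := hW j
    refine ⟨C₁ + C₂, ?_⟩
    filter_upwards [(isOpen_ball.inter isOpen_ball).mem_nhds hp] with z hz
    have a1 := abs_le.1 (h₁ p hp.1 z hz.1)
    have a2 := abs_le.1 (h₂ p hp.2 z hz.2)
    rw [abs_le]
    constructor <;> nlinarith
  obtain ⟨w, hw⟩ := glue_simply_connected (X := Ω) (fun i => {y | (y : E) ∈ ball (i : E) (r i)})
    (fun i => isOpen_ball.preimage continuous_subtype_val) (fun i => mem_ball_self (hr i))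
    (fun i y => W i y) (fun i j x hxi hxj => by
      filter_upwards [(isOpen_ball.preimage continuous_subtype_val).mem_nhds hxi,
        (isOpen_ball.preimage continuous_subtype_val).mem_nhds hxj] with y hy hy'
      exact const i j x hxi hxj y ⟨hy, hy'⟩)
  classical
  refine ⟨fun x => if h : x ∈ Ω then w ⟨x, h⟩ else 0, fun x hx => ?_⟩
  have h1 := hw ⟨x, hx⟩ ⟨x, hx⟩ (mem_ball_self (hr _))
  rw [nhds_subtype, Filter.eventually_comap, Metric.eventually_nhds_iff_ball] at h1
  obtain ⟨δ, hδ, h1⟩ := h1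
  refine ⟨min δ (r ⟨x, hx⟩), lt_min hδ (hr _), (ball_subset_ball (min_le_right _ _)).trans (hb ⟨x, hx⟩), ?_⟩
  obtain ⟨C, hC⟩ := (hW ⟨x, hx⟩).mono (ball_subset_ball (min_le_right δ (r ⟨x, hx⟩)))
  refine ⟨C, fun y hy z hz => ?_⟩
  have hyΩ : y ∈ Ω := hb ⟨x, hx⟩ (ball_subset_ball (min_le_right _ _) hy)
  have hzΩ : z ∈ Ω := hb ⟨x, hx⟩ (ball_subset_ball (min_le_right _ _) hz)
  have e1 := h1 y (ball_subset_ball (min_le_left _ _) hy) ⟨y, hyΩ⟩ rfl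
  have e2 := h1 z (ball_subset_ball (min_le_left _ _) hz) ⟨z, hzΩ⟩ rfl
  have := hC y hy z hz
  simp only [hyΩ, hzΩ, dif_pos]
  simp only at e1 e2
  rw [show w ⟨z, hzΩ⟩ - w ⟨y, hyΩ⟩ = W ⟨x, hx⟩ z - W ⟨x, hx⟩ y by linarith]
  exact this

end GlobalPrim

section Domination

/-- One-dimensional local-to-global principle. -/
lemma local_to_global {G φ : ℝ → ℝ} {a b : ℝ} (hab : a ≤ b) (hG : ContinuousOn G (Icc a b))
    (hφ : IntervalIntegrable φ volume a b)
    (h : ∀ t ∈ Ico a b, ∃ C : ℝ, ∀ᶠ s in 𝓝[>] t,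
      |G s - G t| ≤ (∫ x in t..s, φ x) + C * (s - t) ^ 2) :
    |G b - G a| ≤ ∫ x in a..b, φ x := by
  have hInteg : IntegrableOn φ (uIcc a b) volume := by
    rw [uIcc_of_le hab]
    exact (intervalIntegrable_iff_integrableOn_Icc_of_le hab).1 hφ
  have hI : ContinuousOn (fun x => ∫ t in a..x, φ t) (Icc a b) := by
    have := intervalIntegral.continuousOn_primitive_interval hInteg
    rwa [uIcc_of_le hab] at this
  refine le_of_forall_pos_le_add fun η hη => ?_
  obtain ⟨η', hη', hη'b⟩ : ∃ η' > 0, η' * (b - a) ≤ η := by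
    refine ⟨η / (b - a + 1), by have := sub_nonneg.2 hab; positivity, ?_⟩
    have h0 := sub_nonneg.2 hab
    rw [div_mul_eq_mul_div, div_le_iff₀ (by linarith)]
    nlinarith
  let S : Set ℝ := {t | |G t - G a| ≤ (∫ x in a..t, φ x) + η' * (t - a)}
  have hS : Icc a b ⊆ S := by
    apply IsClosed.Icc_subset_of_forall_exists_gt
    · have : S ∩ Icc a b = {t ∈ Icc a b | |G t - G a| ≤ (∫ x in a..t, φ x) + η' * (t - a)} := by
        ext t; exact and_comm
      rw [this]
      apply isClosed_Icc.isClosed_le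
      · exact (hG.sub continuousOn_const).abs
      · exact hI.add (by fun_prop)
    · simp [S]
    · rintro t ⟨htS, hta, htb⟩ y hy
      obtain ⟨C, hC⟩ := h t ⟨hta, htb⟩
      have e1 : ∀ᶠ s in 𝓝[>] t, s ∈ Ioc t (min y b) :=
        Ioc_mem_nhdsGT (lt_min hy htb)
      have e2 : ∀ᶠ s in 𝓝[>] t, C * (s - t) < η' := by
        have : Filter.Tendsto (fun s => C * (s - t)) (𝓝[>] t) (𝓝 (C * (t - t))) :=
          (Continuous.tendsto (by fun_prop) t).mono_left nhdsWithin_le_nhds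
        simp only [sub_self, mul_zero] at this
        exact this.eventually (gt_mem_nhds hη')
      obtain ⟨s, h1, h2, h3⟩ := (hC.and (e1.and e2)).exists
      refine ⟨s, ?_, h2.1, h2.2.trans (min_le_left _ _)⟩
      have hsb : s ≤ b := h2.2.trans (min_le_right _ _)
      have i1 : IntervalIntegrable φ volume a t := hφ.mono_set (by
        rw [uIcc_of_le hab, uIcc_of_le hta]; exact Icc_subset_Icc le_rfl htb.le)
      have i2 : IntervalIntegrable φ volume t s := hφ.mono_set (by
        rw [uIcc_of_le hab, uIcc_of_le h2.1.le]; exact Icc_subset_Icc hta hsb)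
      have := intervalIntegral.integral_add_adjacent_intervals i1 i2
      show |G s - G a| ≤ (∫ x in a..s, φ x) + η' * (s - a)
      rw [← this]
      have tri : |G s - G a| ≤ |G s - G t| + |G t - G a| := abs_sub_le _ _ _
      have htS' : |G t - G a| ≤ (∫ x in a..t, φ x) + η' * (t - a) := htS
      have hst : 0 < s - t := sub_pos.2 h2.1
      nlinarith
  have := hS (right_mem_Icc.2 hab)
  have h2 : |G b - G a| ≤ (∫ x in a..b, φ x) + η' * (b - a) := this
  linarith

variable {E : Type*} [NormedAddCommGroup E] [NormedSpace ℝ E] {ι : Type*} [Fintype ι]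

/-- The length density of a family of functions along a line. -/
noncomputable def lineLen (fs : ι → E → ℝ) (y ξ : E) (t : ℝ) : ℝ :=
  ∑ i, |deriv (fun s : ℝ => fs i (y + s • ξ)) t|

/-- `g` is dominated by the family `fs` along all segments in `Ω`. -/
def Dom (fs : ι → E → ℝ) (Ω : Set E) (g : E → ℝ) : Prop :=
  ∀ (y ξ : E) (a b : ℝ), a ≤ b → (∀ t ∈ Icc a b, y + t • ξ ∈ Ω) →
    |g (y + b • ξ) - g (y + a • ξ)| ≤ ∫ t in a..b, lineLen fs y ξ t

lemma lineLen_nonneg (fs : ι → E → ℝ) (y ξ : E) (t : ℝ) : 0 ≤ lineLen fs y ξ t :=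
  Finset.sum_nonneg fun _ _ => abs_nonneg _

lemma measurable_lineLen (fs : ι → E → ℝ) (y ξ : E) : Measurable (lineLen fs y ξ) := by
  unfold lineLen
  exact Finset.measurable_fun_sum _ fun i _ =>
    continuous_abs.measurable.comp (measurable_deriv _)

/-- A uniform ball on which all functions of the family are Lipschitz. -/
lemma unif_ball {fs : ι → E → ℝ} {Ω : Set E} (hΩ : IsOpen Ω) (hf : ∀ i, LocLipOn (fs i) Ω)
    {x : E} (hx : x ∈ Ω) : ∃ r > 0, ball x r ⊆ Ω ∧ ∃ K : ι → ℝ≥0,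
      ∀ i, LipschitzOnWith (K i) (fs i) (ball x r) := by
  choose r hr hb K hK using fun i => hf i x hx
  obtain ⟨r₀, hr₀, hb₀⟩ := Metric.isOpen_iff.1 hΩ x hx
  have h1 : ∀ᶠ s in 𝓝[>] (0 : ℝ), ∀ i, s ≤ r i := by
    rw [Filter.eventually_all]
    intro i
    filter_upwards [Ioc_mem_nhdsGT (hr i)] with s hs using hs.2
  obtain ⟨s, hs, hs'⟩ := (h1.and (Ioc_mem_nhdsGT hr₀)).exists
  exact ⟨s, hs'.1, (ball_subset_ball hs'.2).trans hb₀, K,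
    fun i => (hK i).mono (ball_subset_ball (hs i))⟩

lemma continuous_line (y ξ : E) : Continuous (fun s : ℝ => y + s • ξ) := by fun_prop

lemma lip_line {g : E → ℝ} {B : Set E} {K : ℝ≥0} (hK : LipschitzOnWith K g B) (y ξ : E) :
    LipschitzOnWith (K * ‖ξ‖₊) (fun s : ℝ => g (y + s • ξ)) {s | y + s • ξ ∈ B} := by
  refine LipschitzOnWith.of_dist_le_mul fun s hs t ht => ?_
  refine (hK.dist_le_mul _ hs _ ht).trans ?_
  rw [dist_add_left, dist_eq_norm (s • ξ), ← sub_smul, norm_smul, Real.dist_eq, Real.norm_eq_abs]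
  simp only [NNReal.coe_mul, coe_nnnorm]
  apply le_of_eq; ring

lemma lineLen_le {fs : ι → E → ℝ} {B : Set E} (hB : IsOpen B) {K : ι → ℝ≥0}
    (hK : ∀ i, LipschitzOnWith (K i) (fs i) B) {y ξ : E} {t : ℝ} (ht : y + t • ξ ∈ B) :
    lineLen fs y ξ t ≤ (∑ i, (K i : ℝ)) * ‖ξ‖ := by
  unfold lineLen
  rw [Finset.sum_mul]
  refine Finset.sum_le_sum fun i _ => ?_
  have := norm_deriv_le_of_lipschitzOn
    ((hB.preimage (continuous_line y ξ)).mem_nhds ht) (lip_line (hK i) y ξ)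
  simpa using this

lemma lineLen_integrable {fs : ι → E → ℝ} {Ω : Set E} (hΩ : IsOpen Ω)
    (hf : ∀ i, LocLipOn (fs i) Ω) {y ξ : E} {a b : ℝ} (hab : a ≤ b)
    (hp : ∀ t ∈ Icc a b, y + t • ξ ∈ Ω) : IntervalIntegrable (lineLen fs y ξ) volume a b := by
  obtain ⟨M, hM⟩ : ∃ M, ∀ t ∈ Icc a b, lineLen fs y ξ t ≤ M := by
    refine isCompact_Icc.induction_on (p := fun s => ∃ M, ∀ t ∈ s, lineLen fs y ξ t ≤ M) ?_ ?_ ?_ ?_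
    · exact ⟨0, by simp⟩
    · rintro s t hst ⟨M, hM⟩
      exact ⟨M, fun x hx => hM x (hst hx)⟩
    · rintro s t ⟨M, hM⟩ ⟨N, hN⟩
      refine ⟨max M N, fun x hx => ?_⟩
      rcases hx with hx | hx
      · exact (hM x hx).trans (le_max_left _ _)
      · exact (hN x hx).trans (le_max_right _ _)
    · intro t ht
      obtain ⟨r, hr, hb, K, hK⟩ := unif_ball hΩ hf (hp t ht)
      refine ⟨_, mem_nhdsWithin_of_mem_nhds ((isOpen_ball.preimage (continuous_line y ξ)).mem_nhds
        (mem_ball_self hr)), _, fun s hs => lineLen_le isOpen_ball hK hs⟩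
  rw [intervalIntegrable_iff_integrableOn_Icc_of_le hab]
  refine Measure.integrableOn_of_bounded (M := M) (by simp)
    (measurable_lineLen fs y ξ).aestronglyMeasurable ?_
  filter_upwards [ae_restrict_mem measurableSet_Icc] with t ht
  rw [Real.norm_of_nonneg (lineLen_nonneg _ _ _ _)]
  exact hM t ht

lemma LocLipOn.continuousOn {g : E → ℝ} {Ω : Set E} (hg : LocLipOn g Ω) : ContinuousOn g Ω := by
  intro x hx
  obtain ⟨r, hr, hb, K, hK⟩ := hg x hx
  exact (hK.continuousOn.continuousAt (ball_mem_nhds x hr)).continuousWithinAt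

/-- Local criterion for domination. -/
lemma dom_of_local {fs : ι → E → ℝ} {Ω : Set E} (hΩ : IsOpen Ω)
    (hf : ∀ i, LocLipOn (fs i) Ω) {g : E → ℝ} (hg : ContinuousOn g Ω)
    (h : ∀ x ∈ Ω, ∃ r > 0, ball x r ⊆ Ω ∧ ∃ C : ℝ, ∀ ξ : E, ∀ y t s, t < s → y + t • ξ = x →
      (∀ t' ∈ Icc t s, y + t' • ξ ∈ ball x r) →
      |g (y + s • ξ) - g x| ≤ (∫ x in t..s, lineLen fs y ξ x) + C * ‖y + s • ξ - x‖ ^ 2) :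
    Dom fs Ω g := by
  intro y ξ a b hab hp
  refine local_to_global (G := fun t => g (y + t • ξ)) hab
    (hg.comp (continuous_line y ξ).continuousOn hp) (lineLen_integrable hΩ hf hab hp) ?_
  intro t ht
  obtain ⟨r, hr, hb, C, hC⟩ := h _ (hp t ⟨ht.1, ht.2.le⟩)
  refine ⟨C * ‖ξ‖ ^ 2, ?_⟩
  obtain ⟨δ, hδ, hδb⟩ := Metric.isOpen_iff.1 (isOpen_ball.preimage (continuous_line y ξ)) t
    (mem_ball_self (x := y + t • ξ) hr)
  filter_upwards [Ioo_mem_nhdsGT (show t < t + δ by linarith)] with s hs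
  have := hC ξ y t s hs.1 rfl (fun t' ht' => hδb (by
    rw [mem_ball, Real.dist_eq, abs_of_nonneg (sub_nonneg.2 ht'.1)]
    linarith [ht'.2, hs.2]))
  refine this.trans (le_of_eq ?_)
  rw [add_sub_add_left_eq_sub, ← sub_smul, norm_smul, Real.norm_eq_abs, mul_pow, sq_abs]
  ring

lemma dom_self {fs : ι → E → ℝ} {Ω : Set E} (hΩ : IsOpen Ω)
    (hf : ∀ i, LocLipOn (fs i) Ω) (i : ι) : Dom fs Ω (fs i) := by
  refine dom_of_local hΩ hf (hf i).continuousOn fun x hx => ?_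
  obtain ⟨r, hr, hb, K, hK⟩ := unif_ball hΩ hf hx
  refine ⟨r, hr, hb, 0, fun ξ y t s hts hyt hp => ?_⟩
  have hlip : LipschitzOnWith (K i * ‖ξ‖₊) (fun s : ℝ => fs i (y + s • ξ)) (uIcc t s) := by
    rw [uIcc_of_le hts.le]
    exact (lip_line (hK i) y ξ).mono hp
  have e := hlip.absolutelyContinuousOnInterval.integral_deriv_eq_sub
  rw [← hyt, ← e, zero_mul, add_zero]
  rw [← Real.norm_eq_abs]
  refine intervalIntegral.norm_integral_le_of_norm_le (g := lineLen fs y ξ) hts.le ?_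
    (lineLen_integrable hΩ hf hts.le fun t' ht' => hb (hp t' ht'))
  refine .of_forall fun x _ => ?_
  exact Finset.single_le_sum (f := fun i => |deriv (fun s : ℝ => fs i (y + s • ξ)) x|)
    (fun _ _ => abs_nonneg _) (Finset.mem_univ i)

/-- Uniform local Lipschitz bound for dominated functions. -/
lemma dom_lip {fs : ι → E → ℝ} {B : Set E} (hB : IsOpen B) (hBc : Convex ℝ B) {Ω : Set E}
    (hBΩ : B ⊆ Ω) {K : ι → ℝ≥0}
    (hK : ∀ i, LipschitzOnWith (K i) (fs i) B) {g : E → ℝ} (hg : Dom fs Ω g) :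
    LipschitzOnWith (∑ i, K i) g B := by
  refine LipschitzOnWith.of_dist_le_mul fun z hz y hy => ?_
  have hseg : ∀ t ∈ Icc (0 : ℝ) 1, y + t • (z - y) ∈ B := fun t ht =>
    hBc.add_smul_sub_mem hy hz ht
  have h1 := hg y (z - y) 0 1 zero_le_one (fun t ht => hBΩ (hseg t ht))
  have h2 : ‖∫ t in (0 : ℝ)..1, lineLen fs y (z - y) t‖ ≤
      ((∑ i, (K i : ℝ)) * ‖z - y‖) * |(1 : ℝ) - 0| := by
    apply intervalIntegral.norm_integral_le_of_norm_le_const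
    intro t ht
    rw [uIoc_of_le zero_le_one] at ht
    rw [Real.norm_of_nonneg (lineLen_nonneg _ _ _ _)]
    exact lineLen_le hB hK (hseg t ⟨ht.1.le, ht.2⟩)
  simp only [one_smul, add_sub_cancel, zero_smul, add_zero, sub_zero, abs_one, mul_one] at h1 h2
  rw [Real.dist_eq, dist_eq_norm]
  push_cast
  exact h1.trans ((le_abs_self _).trans h2)

lemma Dom.locLip {fs : ι → E → ℝ} {Ω : Set E} (hΩ : IsOpen Ω)
    (hf : ∀ i, LocLipOn (fs i) Ω) {g : E → ℝ} (hg : Dom fs Ω g) : LocLipOn g Ω := by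
  intro x hx
  obtain ⟨r, hr, hb, K, hK⟩ := unif_ball hΩ hf hx
  exact ⟨r, hr, hb, _, dom_lip isOpen_ball (convex_ball _ _) hb hK hg⟩

/-- Existence of the maximal dominated function. -/
lemma exists_max_dom {fs : ι → E → ℝ} {Ω : Set E} (hΩ : IsOpen Ω) (hΩc : IsPreconnected Ω)
    (hf : ∀ i, LocLipOn (fs i) Ω) {x₀ : E} (hx₀ : x₀ ∈ Ω) :
    ∃ D : E → ℝ, Dom fs Ω D ∧ D x₀ = 0 ∧ ∀ g, Dom fs Ω g → ∀ x ∈ Ω, g x - g x₀ ≤ D x := by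
  have bdd : ∀ x ∈ Ω, ∃ M, ∀ g, Dom fs Ω g → |g x - g x₀| ≤ M := by
    intro x hx
    refine hΩc.induction₂ (fun x y => ∃ M, ∀ g, Dom fs Ω g → |g x - g y| ≤ M) ?_ ?_ ?_ hx hx₀
    · intro x hx
      obtain ⟨r, hr, hb, K, hK⟩ := unif_ball hΩ hf hx
      filter_upwards [mem_nhdsWithin_of_mem_nhds (ball_mem_nhds x hr)] with y hy
      refine ⟨((∑ i, K i : ℝ≥0) : ℝ) * dist x y, fun g hg => ?_⟩
      exact (dom_lip isOpen_ball (convex_ball _ _) hb hK hg).dist_le_mul x (mem_ball_self hr) y hy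
    · rintro x y z - - - ⟨M, hM⟩ ⟨N, hN⟩
      exact ⟨M + N, fun g hg => (abs_sub_le _ (g y) _).trans (add_le_add (hM g hg) (hN g hg))⟩
    · rintro x y - - ⟨M, hM⟩
      exact ⟨M, fun g hg => by rw [abs_sub_comm]; exact hM g hg⟩
  have h0 : Dom fs Ω (fun _ => 0) := by
    intro y ξ a b hab _
    simp only [sub_self, abs_zero]
    exact intervalIntegral.integral_nonneg hab fun _ _ => lineLen_nonneg _ _ _ _
  have : Nonempty {g // Dom fs Ω g} := ⟨⟨_, h0⟩⟩
  have bdd' : ∀ x ∈ Ω, BddAbove (range fun g : {g // Dom fs Ω g} => g.1 x - g.1 x₀) := by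
    intro x hx
    obtain ⟨M, hM⟩ := bdd x hx
    refine ⟨M, ?_⟩
    rintro _ ⟨g, rfl⟩
    exact (le_abs_self _).trans (hM g.1 g.2)
  refine ⟨fun x => ⨆ g : {g // Dom fs Ω g}, (g.1 x - g.1 x₀), ?_, by simp, ?_⟩
  · intro y ξ a b hab hp
    have hya := hp a (left_mem_Icc.2 hab)
    have hyb := hp b (right_mem_Icc.2 hab)
    rw [abs_sub_le_iff]
    constructor
    · rw [sub_le_iff_le_add]
      refine ciSup_le fun g => ?_
      have h1 := abs_le.1 (g.2 y ξ a b hab hp)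
      have h2 := le_ciSup (bdd' _ hya) g
      linarith [h1.2]
    · rw [sub_le_iff_le_add]
      refine ciSup_le fun g => ?_
      have h1 := abs_le.1 (g.2 y ξ a b hab hp)
      have h2 := le_ciSup (bdd' _ hyb) g
      linarith [h1.1]
  · intro g hg x hx
    exact le_ciSup (bdd' x hx) ⟨g, hg⟩

end Domination

section AEBound

lemma ae_deriv_bound {G φ : ℝ → ℝ} (hφ : LocallyIntegrable φ volume) (hnn : ∀ t, 0 ≤ φ t)
    {T : Set ℝ} (h : ∀ t ∈ T, ∀ᶠ s in 𝓝[>] t, |G s - G t| ≤ ∫ x in t..s, φ x) :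
    ∀ᵐ t, t ∈ T → |deriv G t| ≤ φ t := by
  filter_upwards [_root_.LocallyIntegrable.ae_hasDerivAt_integral hφ] with t ht hT
  by_cases hd : DifferentiableAt ℝ G t
  · have h1 := hasDerivAt_iff_tendsto_slope.1 (ht t)
    have h2 := hasDerivAt_iff_tendsto_slope.1 hd.hasDerivAt
    have hsub : 𝓝[>] t ≤ 𝓝[≠] t := nhdsWithin_mono t (fun s hs => ne_of_gt hs)
    refine le_of_tendsto_of_tendsto (h2.mono_left hsub).abs (h1.mono_left hsub) ?_
    filter_upwards [h t hT, self_mem_nhdsWithin] with s hs hts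
    have hts' : 0 < s - t := sub_pos.2 hts
    rw [slope_def_field, slope_def_field, abs_div, abs_of_pos hts',
      intervalIntegral.integral_same, sub_zero]
    gcongr
  · rw [deriv_zero_of_not_differentiableAt hd, abs_zero]
    exact hnn t

variable {E : Type*} [NormedAddCommGroup E] [NormedSpace ℝ E] {ι : Type*} [Fintype ι]

lemma deriv_line (g : E → ℝ) (p ξ : E) (t : ℝ) :
    deriv (fun s : ℝ => g (p + s • ξ)) t = lineDeriv ℝ g (p + t • ξ) ξ := by
  unfold lineDeriv
  have := deriv_comp_const_add (f := fun s : ℝ => g (p + s • ξ)) t 0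
  rw [add_zero] at this
  rw [← this]
  congr 1; ext s
  rw [add_smul, add_assoc]

variable [MeasurableSpace E] [BorelSpace E] [FiniteDimensional ℝ E]
  {μ : Measure E} [μ.IsAddHaarMeasure]

lemma ae_lineDeriv_bound {fs fs' : ι → E → ℝ} {Ω B : Set E} (hB : IsOpen B) (hBΩ : B ⊆ Ω)
    {K : ι → ℝ≥0} (hK : ∀ i, LipschitzWith (K i) (fs' i)) (hfs : ∀ i, EqOn (fs i) (fs' i) B)
    {g g' : E → ℝ} (hg : Dom fs Ω g) (hg' : Continuous g') (hgg : EqOn g g' B) (ξ : E) :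
    ∀ᵐ x ∂μ, x ∈ B → |lineDeriv ℝ g' x ξ| ≤ ∑ i, |lineDeriv ℝ (fs' i) x ξ| := by
  let S : Set E := {x | x ∈ B → |lineDeriv ℝ g' x ξ| ≤ ∑ i, |lineDeriv ℝ (fs' i) x ξ|}
  have hS : MeasurableSet S := by
    have : S = Bᶜ ∪ {x | |lineDeriv ℝ g' x ξ| ≤ ∑ i, |lineDeriv ℝ (fs' i) x ξ|} := by
      ext x; simp only [S, mem_ofPred_eq, mem_union, mem_compl_iff]; tauto
    rw [this]
    refine hB.measurableSet.compl.union (measurableSet_le ?_ ?_)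
    · exact continuous_abs.measurable.comp (measurable_lineDeriv hg')
    · exact Finset.measurable_fun_sum _ fun i _ =>
        continuous_abs.measurable.comp (measurable_lineDeriv (hK i).continuous)
  let L : ℝ →L[ℝ] E := ContinuousLinearMap.smulRight (1 : ℝ →L[ℝ] ℝ) ξ
  suffices A : ∀ p, ∀ᵐ (t : ℝ) ∂volume, (p + t • ξ) ∈ S from
    ae_mem_of_ae_add_linearMap_mem L.toLinearMap volume μ hS A
  intro p
  have hloc : LocallyIntegrable (lineLen fs' p ξ) volume := by
    have : MemLp (lineLen fs' p ξ) ⊤ volume := by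
      refine memLp_top_of_bound (measurable_lineLen fs' p ξ).aestronglyMeasurable
        ((∑ i, (K i : ℝ)) * ‖ξ‖) (.of_forall fun t => ?_)
      rw [Real.norm_of_nonneg (lineLen_nonneg _ _ _ _)]
      exact lineLen_le (B := univ) isOpen_univ (fun i => (hK i).lipschitzOnWith) (mem_univ _)
    exact this.locallyIntegrable le_top
  have key := ae_deriv_bound (G := fun t => g' (p + t • ξ)) (T := {t | p + t • ξ ∈ B}) hloc
    (lineLen_nonneg fs' p ξ) (by
      intro t ht
      obtain ⟨δ, hδ, hδb⟩ := Metric.isOpen_iff.1 (hB.preimage (continuous_line p ξ)) t ht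
      filter_upwards [Ioo_mem_nhdsGT (show t < t + δ by linarith)] with s hs
      have hseg : ∀ t' ∈ Icc t s, p + t' • ξ ∈ B := fun t' ht' => hδb (by
        rw [mem_ball, Real.dist_eq, abs_of_nonneg (sub_nonneg.2 ht'.1)]
        linarith [ht'.2, hs.2])
      have := hg p ξ t s hs.1.le (fun t' ht' => hBΩ (hseg t' ht'))
      rw [hgg (hseg t (left_mem_Icc.2 hs.1.le)), hgg (hseg s (right_mem_Icc.2 hs.1.le))] at this
      refine this.trans (le_of_eq ?_)
      apply intervalIntegral.integral_congr
      intro t' ht'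
      rw [uIcc_of_le hs.1.le] at ht'
      refine Finset.sum_congr rfl fun i _ => ?_
      congr 1
      apply Filter.EventuallyEq.deriv_eq
      filter_upwards [(hB.preimage (continuous_line p ξ)).mem_nhds (hseg t' ht')] with x hx
      exact hfs i hx)
  filter_upwards [key] with t ht htB
  have := ht htB
  rw [deriv_line] at this
  unfold lineLen at this
  simpa only [deriv_line] using this

/-- Almost everywhere bound for the derivative of a dominated function. -/
lemma dom_ae {fs : ι → E → ℝ} {Ω : Set E} (hΩ : IsOpen Ω)
    (hf : ∀ i, LocLipOn (fs i) Ω) {g : E → ℝ} (hg : Dom fs Ω g) :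
    ∀ᵐ x ∂μ, x ∈ Ω → (∀ i, DifferentiableAt ℝ (fs i) x) ∧
      ∀ ξ, |fderiv ℝ g x ξ| ≤ ∑ i, |fderiv ℝ (fs i) x ξ| := by
  rw [ae_iff]
  refine measure_null_of_locally_null _ fun x hx => ?_
  have hxΩ : x ∈ Ω := by
    simp only [mem_ofPred_eq, Classical.not_imp] at hx; exact hx.1
  obtain ⟨r, hr, hb, K, hK⟩ := unif_ball hΩ hf hxΩ
  refine ⟨_, inter_mem_nhdsWithin _ (ball_mem_nhds x hr), ?_⟩
  choose fs' hfs' hfse using fun i => (hK i).extend_real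
  obtain ⟨g', hg', hge⟩ := (dom_lip isOpen_ball (convex_ball _ _) hb hK hg).extend_real
  obtain ⟨Q, hQc, hQd⟩ := TopologicalSpace.exists_countable_dense E
  have h1 : ∀ᵐ y ∂μ, ∀ ξ ∈ Q, y ∈ ball x r →
      |lineDeriv ℝ g' y ξ| ≤ ∑ i, |lineDeriv ℝ (fs' i) y ξ| :=
    (ae_ball_iff hQc).2 fun ξ _ =>
      ae_lineDeriv_bound isOpen_ball hb hfs' hfse hg hg'.continuous hge ξ
  have h2 : ∀ᵐ y ∂μ, ∀ i, DifferentiableAt ℝ (fs' i) y :=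
    ae_all_iff.2 fun i => (hfs' i).ae_differentiableAt
  have h3 : ∀ᵐ y ∂μ, y ∈ ball x r → (∀ i, DifferentiableAt ℝ (fs i) y) ∧
      ∀ ξ, |fderiv ℝ g y ξ| ≤ ∑ i, |fderiv ℝ (fs i) y ξ| := by
    filter_upwards [h1, h2, hg'.ae_differentiableAt (μ := μ)] with y k1 k2 k3 hy
    have ef : ∀ i, fs i =ᶠ[𝓝 y] fs' i := fun i => by
      filter_upwards [isOpen_ball.mem_nhds hy] with z hz using hfse i hz
    have eg : g =ᶠ[𝓝 y] g' := by
      filter_upwards [isOpen_ball.mem_nhds hy] with z hz using hge hz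
    refine ⟨fun i => (ef i).differentiableAt_iff.2 (k2 i), ?_⟩
    rw [eg.fderiv_eq]
    simp only [(ef _).fderiv_eq]
    have hcl : IsClosed {ξ | |fderiv ℝ g' y ξ| ≤ ∑ i, |fderiv ℝ (fs' i) y ξ|} := by
      apply isClosed_le
      · fun_prop
      · fun_prop
    intro ξ
    have : Q ⊆ {ξ | |fderiv ℝ g' y ξ| ≤ ∑ i, |fderiv ℝ (fs' i) y ξ|} := by
      intro η hη
      have := k1 η hη hy
      rw [k3.lineDeriv_eq_fderiv] at this
      simp only [(k2 _).lineDeriv_eq_fderiv] at this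
      exact this
    exact hcl.closure_subset_iff.2 this (hQd ξ)
  refine measure_mono_null ?_ (ae_iff.1 h3)
  rintro y ⟨hy1, hy2⟩
  simp only [mem_ofPred_eq, Classical.not_imp] at hy1 ⊢
  exact ⟨hy2, hy1.2⟩

end AEBound

section Wedge

variable {n m : ℕ}

lemma rank_wedge {Ω : Set (EuclideanSpace ℝ (Fin n))} (hΩ : IsOpen Ω)
    {f : EuclideanSpace ℝ (Fin n) → EuclideanSpace ℝ (Fin m)}
    (hf : ∀ i, LocLipOn (fun x => f x i) Ω)
    (hrank : ∀ᵐ x ∂(volume : Measure (EuclideanSpace ℝ (Fin n))), x ∈ Ω → derivRank f x ≤ 1)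
    {g : EuclideanSpace ℝ (Fin n) → ℝ} (hg : Dom (fun i x => f x i) Ω g) (i : Fin m) :
    ∀ᵐ x ∂(volume : Measure (EuclideanSpace ℝ (Fin n))), x ∈ Ω → ∀ ξ ζ,
      fderiv ℝ g x ξ * fderiv ℝ (fun x => f x i) x ζ =
        fderiv ℝ g x ζ * fderiv ℝ (fun x => f x i) x ξ := by
  filter_upwards [hrank, dom_ae (μ := volume) hΩ hf hg] with x h1 h2 hx ξ ζ
  obtain ⟨hd, hb⟩ := h2 hx
  have hd' : DifferentiableAt ℝ f x := differentiableAt_euclidean.2 hd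
  have hcoord : ∀ j η, fderiv ℝ (fun x => f x j) x η = (fderiv ℝ f x η) j := by
    intro j η
    have := ((EuclideanSpace.proj (𝕜 := ℝ) j : EuclideanSpace ℝ (Fin m) →L[ℝ] ℝ).hasFDerivAt.comp x
      hd'.hasFDerivAt).fderiv
    have e : (⇑(EuclideanSpace.proj (𝕜 := ℝ) j : EuclideanSpace ℝ (Fin m) →L[ℝ] ℝ) ∘ f) =
      fun x => f x j := rfl
    rw [e] at this
    rw [this]; rfl
  have hr := h1 hx
  unfold derivRank at hr
  obtain ⟨v, hv⟩ := finrank_le_one_iff.1 hr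
  obtain ⟨a, ha⟩ := hv ⟨fderiv ℝ f x ξ, ⟨ξ, rfl⟩⟩
  obtain ⟨b, hb'⟩ := hv ⟨fderiv ℝ f x ζ, ⟨ζ, rfl⟩⟩
  have ha : a • (v : EuclideanSpace ℝ (Fin m)) = fderiv ℝ f x ξ := congrArg Subtype.val ha
  have hb' : b • (v : EuclideanSpace ℝ (Fin m)) = fderiv ℝ f x ζ := congrArg Subtype.val hb'
  have hη : fderiv ℝ f x (b • ξ - a • ζ) = 0 := by
    rw [map_sub, map_smul, map_smul, ← ha, ← hb', smul_smul, smul_smul, mul_comm, sub_self]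
  have hgη : fderiv ℝ g x (b • ξ - a • ζ) = 0 := by
    have := hb (b • ξ - a • ζ)
    simp only [hcoord, hη] at this
    simpa using this
  rw [map_sub, map_smul, map_smul, smul_eq_mul, smul_eq_mul] at hgη
  rw [hcoord, hcoord, ← ha, ← hb']
  simp only [PiLp.smul_apply, smul_eq_mul]
  linear_combination (v : EuclideanSpace ℝ (Fin m)) i * hgη

end Wedge

section Oscillation

variable {n m : ℕ}

lemma Dom.of_le {E ι : Type*} [NormedAddCommGroup E] [NormedSpace ℝ E] [Fintype ι]
    {fs : ι → E → ℝ} {Ω : Set E} {g u : E → ℝ} (hg : Dom fs Ω g)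
    (h : ∀ x y, |u x - u y| ≤ |g x - g y|) : Dom fs Ω u :=
  fun y ξ a b hab hp => (h _ _).trans (hg y ξ a b hab hp)

lemma clamp_diff (a b c ε : ℝ) :
    |max 0 (min (a - c) ε) - max 0 (min (b - c) ε)| ≤ |a - b| := by
  have h1 := abs_max_sub_max_le_max 0 (min (a - c) ε) 0 (min (b - c) ε)
  have h2 := abs_min_sub_min_le_max (a - c) ε (b - c) ε
  simp only [sub_self, abs_zero, sub_sub_sub_cancel_right] at h1 h2
  exact (h1.trans_eq (max_eq_right (abs_nonneg _))).trans
    (h2.trans_eq (max_eq_left (abs_nonneg _)))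

lemma min_diff (a b c : ℝ) : |min a c - min b c| ≤ |a - b| := by
  have h2 := abs_min_sub_min_le_max a c b c
  simp only [sub_self, abs_zero] at h2
  rwa [max_eq_left (abs_nonneg _)] at h2

/-- Oscillation estimate on connected pieces of level regions of the maximal function. -/
lemma osc_bound {Ω : Set (EuclideanSpace ℝ (Fin n))} (hΩ : IsOpen Ω)
    (hsc : SimplyConnectedSpace ↥Ω)
    {f : EuclideanSpace ℝ (Fin n) → EuclideanSpace ℝ (Fin m)}
    (hf : ∀ i, LocLipOn (fun x => f x i) Ω)
    (hrank : ∀ᵐ x ∂(volume : Measure (EuclideanSpace ℝ (Fin n))), x ∈ Ω → derivRank f x ≤ 1)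
    {x₀ : EuclideanSpace ℝ (Fin n)}
    {D : EuclideanSpace ℝ (Fin n) → ℝ} (hD : Dom (fun i x => f x i) Ω D) (hD0 : D x₀ = 0)
    (hDmax : ∀ g, Dom (fun i x => f x i) Ω g → ∀ x ∈ Ω, g x - g x₀ ≤ D x)
    {c ε R : ℝ} (hε : 0 < ε) {A : Set (EuclideanSpace ℝ (Fin n))} (hA : IsOpen A)
    (hAc : IsPreconnected A) (hAΩ : A ⊆ Ω) (hA1 : ∀ x ∈ A, c + ε ≤ D x)
    (hA2 : ∀ x ∈ A, D x ≤ c + R) (i : Fin m) :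
    ∀ x ∈ A, ∀ y ∈ A, |f x i - f y i| ≤ 2 * R := by
  set u : EuclideanSpace ℝ (Fin n) → ℝ := fun x => max 0 (min (D x - c) ε) with hu
  have huD : Dom (fun i x => f x i) Ω u := hD.of_le fun x y => clamp_diff _ _ _ _
  have hu0 : ∀ x, 0 ≤ u x := fun x => le_max_left _ _
  have hu1 : ∀ x, u x ≤ ε := fun x => max_le hε.le (min_le_right _ _)
  obtain ⟨h, hh⟩ := global_prim (μ := volume) hΩ hsc (huD.locLip hΩ hf) (hf i)
    (rank_wedge hΩ hf hrank huD i)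
  have hcont : ContinuousOn h Ω := by
    intro x hx
    apply ContinuousAt.continuousWithinAt
    obtain ⟨r, hr, hb, C, hC⟩ := hh x hx
    have hfc : ContinuousAt (fun x => f x i) x :=
      (hf i).continuousOn.continuousAt (hΩ.mem_nhds hx)
    rw [ContinuousAt, tendsto_iff_norm_sub_tendsto_zero]
    have lim : Filter.Tendsto (fun z => |u x| * |f z i - f x i| + C * ‖z - x‖ ^ 2) (𝓝 x)
        (𝓝 (|u x| * |f x i - f x i| + C * ‖x - x‖ ^ 2)) := by
      have h1 : ContinuousAt (fun z => |u x| * |f z i - f x i| + C * ‖z - x‖ ^ 2) x := by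
        have : ContinuousAt (fun z => |f z i - f x i|) x := (hfc.sub continuousAt_const).abs
        exact (continuousAt_const.mul this).add (by fun_prop)
      exact h1
    simp only [sub_self, abs_zero, mul_zero, norm_zero, ne_eq, OfNat.ofNat_ne_zero,
      not_false_eq_true, zero_pow, add_zero] at lim
    refine squeeze_zero' (.of_forall fun z => norm_nonneg _) ?_ lim
    filter_upwards [ball_mem_nhds x hr] with z hz
    have h1 := hC x (mem_ball_self hr) z hz
    have h2 : h z - h x = (h z - h x - u x * (f z i - f x i)) + u x * (f z i - f x i) := by ring
    rw [Real.norm_eq_abs, h2]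
    have h3 := abs_add_le (h z - h x - u x * (f z i - f x i)) (u x * (f z i - f x i))
    rw [abs_mul] at h3
    linarith
  have hDc : ContinuousOn D Ω := (hD.locLip hΩ hf).continuousOn
  have hfi := dom_self hΩ hf i
  set g : EuclideanSpace ℝ (Fin n) → ℝ := fun x => min (D x) c + |h x - h x₀| / ε with hg
  have absdiff : ∀ z x, |(|h z - h x₀| - |h x - h x₀|)| ≤ |h z - h x| := by
    intro z x
    have := abs_abs_sub_abs_le (h z - h x₀) (h x - h x₀)
    rwa [sub_sub_sub_cancel_right] at this
  have gdiff : ∀ z x, |g z - g x| ≤ |min (D z) c - min (D x) c| + |h z - h x| / ε := by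
    intro z x
    have e : g z - g x = (min (D z) c - min (D x) c) + (|h z - h x₀| - |h x - h x₀|) / ε := by
      simp only [hg]; ring
    rw [e]
    refine (abs_add_le _ _).trans ?_
    rw [abs_div, abs_of_pos hε]
    exact add_le_add le_rfl (div_le_div_of_nonneg_right (absdiff z x) hε.le)
  have hgD : Dom (fun i x => f x i) Ω g := by
    refine dom_of_local hΩ hf ?_ ?_
    · exact (((continuous_id.min continuous_const).comp_continuousOn hDc :
        ContinuousOn (fun x => min (D x) c) Ω)).add ((hcont.sub continuousOn_const).abs.div_const _)
    · intro x hx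
      obtain ⟨r, hr, hb, C, hC⟩ := hh x hx
      rcases le_or_gt (D x) c with hxc | hxc
      · refine ⟨r, hr, hb, C / ε, fun ξ y t s hts hyt hp => ?_⟩
        have hux : u x = 0 := by
          simp only [hu]
          exact max_eq_left ((min_le_left _ _).trans (by linarith))
        have hz := hp s (right_mem_Icc.2 hts.le)
        have h1 := hC x (mem_ball_self hr) _ hz
        rw [hux, zero_mul, sub_zero] at h1
        have h2 := hD y ξ t s hts.le (fun t' ht' => hb (hp t' ht'))
        rw [hyt] at h2
        refine (gdiff _ _).trans (add_le_add ((min_diff _ _ _).trans h2) ?_)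
        rw [div_mul_eq_mul_div]
        gcongr
      · have hnb : {z | c < D z} ∈ 𝓝 x :=
          (hDc.continuousAt (hΩ.mem_nhds hx)).eventually (lt_mem_nhds hxc)
        obtain ⟨r', hr', hb'⟩ := Metric.mem_nhds_iff.1 hnb
        refine ⟨min r r', lt_min hr hr', (ball_subset_ball (min_le_left _ _)).trans hb, C / ε,
          fun ξ y t s hts hyt hp => ?_⟩
        have hz := hp s (right_mem_Icc.2 hts.le)
        have h1 := hC x (mem_ball_self hr) _ (ball_subset_ball (min_le_left _ _) hz)
        have hz' : c < D (y + s • ξ) := hb' (ball_subset_ball (min_le_right _ _) hz)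
        have h2 := hfi y ξ t s hts.le
          (fun t' ht' => hb (ball_subset_ball (min_le_left _ _) (hp t' ht')))
        rw [hyt] at h2
        refine (gdiff _ _).trans ?_
        rw [min_eq_right hz'.le, min_eq_right hxc.le, sub_self, abs_zero, zero_add,
          div_le_iff₀ hε, add_mul, div_mul_eq_mul_div, div_mul_cancel₀ _ hε.ne']
        have h3 : |u x * (f (y + s • ξ) i - f x i)| ≤
            ε * ∫ x in t..s, lineLen (fun i x => f x i) y ξ x := by
          rw [abs_mul, abs_of_nonneg (hu0 x)]
          exact mul_le_mul (hu1 x) h2 (abs_nonneg _) hε.le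
        have e : h (y + s • ξ) - h x = (h (y + s • ξ) - h x - u x * (f (y + s • ξ) i - f x i)) +
          u x * (f (y + s • ξ) i - f x i) := by ring
        rw [e]
        refine (abs_add_le _ _).trans ?_
        linarith
  have hbd : ∀ x ∈ A, |h x - h x₀| ≤ ε * R := by
    intro x hx
    have h1 := hDmax g hgD x (hAΩ hx)
    have h2 := hA1 x hx
    have h3 := hA2 x hx
    have e1 : g x = c + |h x - h x₀| / ε := by
      simp only [hg]; rw [min_eq_right (by linarith)]
    have e2 : g x₀ = min (D x₀) c := by simp [hg]
    have h4 : min (D x₀) c ≤ 0 := (min_le_left _ _).trans hD0.le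
    have h5 : |h x - h x₀| / ε ≤ R := by linarith
    rw [div_le_iff₀ hε] at h5
    linarith
  have hconst := quad_const hA hAc (g := fun x => h x - ε * f x i) (by
    intro x hx
    obtain ⟨r, hr, hb, C, hC⟩ := hh x (hAΩ hx)
    refine ⟨C, ?_⟩
    filter_upwards [ball_mem_nhds x hr] with z hz
    have h1 := hC x (mem_ball_self hr) z hz
    have hux : u x = ε := by
      have := hA1 x hx
      simp only [hu]
      rw [min_eq_right (by linarith), max_eq_right hε.le]
    rw [hux] at h1
    rw [show h z - ε * f z i - (h x - ε * f x i) = h z - h x - ε * (f z i - f x i) by ring]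
    exact h1)
  intro x hx y hy
  have h1 : h x - ε * f x i = h y - ε * f y i := hconst x hx y hy
  have h2 := abs_le.1 (hbd x hx)
  have h3 := abs_le.1 (hbd y hy)
  have h4 : ε * (f x i - f y i) ≤ ε * (2 * R) := by nlinarith [h2.2, h3.1]
  have h5 : ε * (-(2 * R)) ≤ ε * (f x i - f y i) := by nlinarith [h2.1, h3.2]
  exact abs_le.2 ⟨le_of_mul_le_mul_left h5 hε, le_of_mul_le_mul_left h4 hε⟩

end Oscillation

section Construction

open Filter in
lemma exists_smooth_near {n : ℕ} {Ω : Set (EuclideanSpace ℝ (Fin n))} (hΩ : IsOpen Ω)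
    {D : EuclideanSpace ℝ (Fin n) → ℝ} (hD : ContinuousOn D Ω) {ε : ℝ} (hε : 0 < ε) :
    ∃ a : EuclideanSpace ℝ (Fin n) → ℝ, (∀ x ∈ Ω, ContDiffAt ℝ (⊤ : ℕ∞) a x) ∧
      ∀ x ∈ Ω, |a x - D x| < ε := by
  classical
  let U : TopologicalSpace.Opens (EuclideanSpace ℝ (Fin n)) := ⟨Ω, hΩ⟩
  have hcont : Continuous (fun x : U => D x) := continuousOn_iff_continuous_domRestrict.1 hD
  have : LocallyCompactSpace U := hΩ.locallyCompactSpace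
  have : SigmaCompactSpace U := inferInstance
  obtain ⟨g, hg, -⟩ := hcont.exists_contMDiff_approx (modelWithCornersSelf ℝ (EuclideanSpace ℝ (Fin n)))
    (⊤ : ℕ∞) (ε := fun _ => ε) continuous_const (fun _ => hε)
  refine ⟨fun x => if h : x ∈ Ω then g ⟨x, h⟩ else 0, fun x hx => ?_, fun x hx => ?_⟩
  · rw [← contMDiffAt_iff_contDiffAt]
    have := contMDiffAt_subtype_iff (I := modelWithCornersSelf ℝ (EuclideanSpace ℝ (Fin n)))
      (I' := modelWithCornersSelf ℝ ℝ) (n := ((⊤ : ℕ∞) : WithTop ℕ∞)) (U := U)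
      (f := fun x => if h : x ∈ Ω then g ⟨x, h⟩ else 0) (x := ⟨x, hx⟩)
    refine this.1 ?_
    have e : (fun x : U => if h : (x : EuclideanSpace ℝ (Fin n)) ∈ Ω then g ⟨x, h⟩ else 0) = g := by
      funext y
      have hy : (y : EuclideanSpace ℝ (Fin n)) ∈ Ω := y.2
      simp only [hy, dite_true]
    rw [e]
    exact g.contMDiff.contMDiffAt
  · have := hg ⟨x, hx⟩
    rw [Real.dist_eq] at this
    simpa only [hx, dite_true] using this

variable {E V : Type*} [NormedAddCommGroup E] [NormedSpace ℝ E]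
  [NormedAddCommGroup V] [NormedSpace ℝ V]

lemma derivRank_le_one_of_local {F : E → V} {x : E} {s : E → ℝ} (hs : DifferentiableAt ℝ s x)
    {P Q : V} (h : F =ᶠ[𝓝 x] fun y => P + s y • Q) : derivRank F x ≤ 1 := by
  have h1 : HasFDerivAt (fun y => P + s y • Q) ((fderiv ℝ s x).smulRight Q) x :=
    (hs.hasFDerivAt.smul_const Q).const_add P
  have h2 : fderiv ℝ F x = (fderiv ℝ s x).smulRight Q := by
    rw [h.fderiv_eq, h1.fderiv]
  unfold derivRank
  rw [h2]
  have h3 : LinearMap.range (((fderiv ℝ s x).smulRight Q : E →L[ℝ] V) : E →ₗ[ℝ] V) ≤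
      Submodule.span ℝ {Q} := by
    rintro _ ⟨v, rfl⟩
    exact Submodule.smul_mem _ _ (Submodule.mem_span_singleton_self Q)
  exact (Submodule.finrank_mono h3).trans ((finrank_span_le_card _).trans (by simp))

open Classical in
/-- Locally constant choice of a value of `f` on the component of `S` containing `x`. -/
noncomputable def repVal (f : E → V) (S : Set E) (x : E) : V :=
  if h : (connectedComponentIn S x).Nonempty then f h.some else 0

lemma repVal_loc (f : E → V) {S : Set E} (hS : IsOpen S) {x : E} (hx : x ∈ S) :
    ∀ᶠ y in 𝓝 x, repVal f S y = repVal f S x := by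
  filter_upwards [hS.connectedComponentIn.mem_nhds (mem_connectedComponentIn hx)] with y hy
  unfold repVal
  rw [connectedComponentIn_eq hy]

lemma repVal_near {f : E → V} {S : Set E} (hS : IsOpen S) {δ : ℝ}
    (h : ∀ A : Set E, IsOpen A → IsPreconnected A → A ⊆ S → ∀ x ∈ A, ∀ y ∈ A, ‖f x - f y‖ ≤ δ)
    {x : E} (hx : x ∈ S) : ‖repVal f S x - f x‖ ≤ δ := by
  have hne : (connectedComponentIn S x).Nonempty := ⟨x, mem_connectedComponentIn hx⟩
  unfold repVal
  rw [dif_pos hne]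
  exact h _ hS.connectedComponentIn isPreconnected_connectedComponentIn
    (connectedComponentIn_subset _ _) _ hne.some_mem _ (mem_connectedComponentIn hx)

/-- The smooth step function. -/
noncomputable def stepFn (t : ℝ) : ℝ := Real.smoothTransition (2 * t - 1 / 2)

lemma stepFn_contDiff : ContDiff ℝ (⊤ : ℕ∞) stepFn :=
  Real.smoothTransition.contDiff.comp ((contDiff_const.mul contDiff_id).sub contDiff_const)

lemma exists_rank_one_near {Ω : Set E} (hΩ : IsOpen Ω) {a : E → ℝ}
    (ha : ∀ x ∈ Ω, ContDiffAt ℝ (⊤ : ℕ∞) a x) {f : E → V} {δ : ℝ}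
    (h : ∀ k : ℤ, ∀ A : Set E, IsOpen A → IsPreconnected A → A ⊆ Ω →
      (∀ x ∈ A, (k : ℝ) - 1 < a x ∧ a x < k + 1) → ∀ x ∈ A, ∀ y ∈ A, ‖f x - f y‖ ≤ δ) :
    ∃ F : E → V, ContDiffOn ℝ (⊤ : ℕ∞) F Ω ∧ (∀ x ∈ Ω, derivRank F x ≤ 1) ∧
      ∀ x ∈ Ω, ‖F x - f x‖ ≤ δ := by
  have hac : ContinuousOn a Ω := fun x hx => (ha x hx).continuousAt.continuousWithinAt
  set S : ℤ → Set E := fun k => Ω ∩ a ⁻¹' (Ioo ((k : ℝ) - 1) (k + 1)) with hS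
  have hSo : ∀ k, IsOpen (S k) := fun k => hac.isOpen_inter_preimage hΩ isOpen_Ioo
  set p : ℤ → E → V := fun k => repVal f (S k) with hp
  have hloc : ∀ k x, x ∈ S k → ∀ᶠ y in 𝓝 x, p k y = p k x :=
    fun k x hx => repVal_loc f (hSo k) hx
  have hnear : ∀ k x, x ∈ S k → ‖p k x - f x‖ ≤ δ := fun k x hx =>
    repVal_near (hSo k) (fun A hA hAc hAS => h k A hA hAc (fun y hy => (hAS hy).1)
      (fun y hy => (hAS hy).2)) hx
  set F : E → V := fun x => p ⌊a x⌋ x + stepFn (a x - ⌊a x⌋) • (p (⌊a x⌋ + 1) x - p ⌊a x⌋ x)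
    with hF
  have key : ∀ x ∈ Ω, ∃ P Q : V, ∃ k : ℤ, F =ᶠ[𝓝 x] fun y => P + stepFn (a y - k) • Q := by
    intro x hx
    have hax : ContinuousAt a x := (ha x hx).continuousAt
    rcases (Int.floor_le (a x)).lt_or_eq with hlt | heq
    · set k := ⌊a x⌋ with hk
      have hlt2 : a x < k + 1 := Int.lt_floor_add_one (a x)
      have h1 : x ∈ S k := ⟨hx, by constructor <;> linarith⟩
      have h2 : x ∈ S (k + 1) := ⟨hx, by constructor <;> push_cast <;> linarith⟩
      refine ⟨p k x, p (k + 1) x - p k x, k, ?_⟩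
      filter_upwards [hloc k x h1, hloc (k + 1) x h2, hax.eventually (lt_mem_nhds hlt),
        hax.eventually (gt_mem_nhds hlt2)] with y hy1 hy2 hy3 hy4
      have : ⌊a y⌋ = k := Int.floor_eq_iff.2 ⟨hy3.le, hy4⟩
      simp only [hF, this, hy1, hy2]
    · set k := ⌊a x⌋ with hk
      have h1 : x ∈ S k := ⟨hx, by constructor <;> linarith⟩
      refine ⟨p k x, 0, k, ?_⟩
      filter_upwards [hloc k x h1,
        hax.eventually (lt_mem_nhds (show (k : ℝ) - 1 / 4 < a x by linarith)),
        hax.eventually (gt_mem_nhds (show a x < (k : ℝ) + 1 / 4 by linarith))] with y hy1 hy3 hy4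
      rw [smul_zero, add_zero, ← hy1]
      rcases le_or_gt (k : ℝ) (a y) with hc | hc
      · have : ⌊a y⌋ = k := Int.floor_eq_iff.2 ⟨hc, by linarith⟩
        have h0 : stepFn (a y - k) = 0 :=
          Real.smoothTransition.zero_of_nonpos (by linarith)
        simp only [hF, this, h0, zero_smul, add_zero]
      · have : ⌊a y⌋ = k - 1 := Int.floor_eq_iff.2 ⟨by push_cast; linarith, by push_cast; linarith⟩
        have h0 : stepFn (a y - ((k - 1 : ℤ) : ℝ)) = 1 :=
          Real.smoothTransition.one_of_one_le (by push_cast; linarith)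
        simp only [hF, this, h0, one_smul, sub_add_cancel, add_sub_cancel]
  have hs : ∀ (k : ℤ), ∀ x ∈ Ω, ContDiffAt ℝ (⊤ : ℕ∞) (fun y => stepFn (a y - k)) x :=
    fun k x hx => (stepFn_contDiff.contDiffAt).comp x ((ha x hx).sub contDiffAt_const)
  refine ⟨F, fun x hx => ?_, fun x hx => ?_, fun x hx => ?_⟩
  · obtain ⟨P, Q, k, hk⟩ := key x hx
    exact ((contDiffAt_const.add ((hs k x hx).smul contDiffAt_const)).congr_of_eventuallyEq
      hk).contDiffWithinAt
  · obtain ⟨P, Q, k, hk⟩ := key x hx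
    exact derivRank_le_one_of_local ((hs k x hx).differentiableAt (by simp)) hk
  · set k := ⌊a x⌋ with hk
    have hlt2 : a x < k + 1 := Int.lt_floor_add_one (a x)
    have hle : (k : ℝ) ≤ a x := Int.floor_le (a x)
    have h1 := hnear k x ⟨hx, by constructor <;> linarith⟩
    have h0 : 0 ≤ stepFn (a x - k) := Real.smoothTransition.nonneg _
    have h0' : stepFn (a x - k) ≤ 1 := Real.smoothTransition.le_one _
    have h2 := hnear (k + 1) x
    rcases hle.lt_or_eq with hlt | heq
    · have h2 := hnear (k + 1) x ⟨hx, by constructor <;> push_cast <;> linarith⟩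
      have e : F x - f x = (1 - stepFn (a x - k)) • (p k x - f x) +
          stepFn (a x - k) • (p (k + 1) x - f x) := by
        simp only [hF, ← hk]; module
      rw [e]
      refine (norm_add_le _ _).trans ?_
      rw [norm_smul, norm_smul, Real.norm_of_nonneg h0, Real.norm_of_nonneg (sub_nonneg.2 h0')]
      nlinarith
    · have h3 : stepFn (a x - k) = 0 := Real.smoothTransition.zero_of_nonpos (by linarith)
      have e : F x = p k x := by simp only [hF, ← hk, h3, zero_smul, add_zero]
      rw [e]; exact h1

lemma LocLipOn.coord {m : ℕ} {f : E → EuclideanSpace ℝ (Fin m)} {Ω : Set E} (hf : LocLipOn f Ω)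
    (i : Fin m) : LocLipOn (fun x => f x i) Ω := by
  intro x hx
  obtain ⟨r, hr, hb, K, hK⟩ := hf x hx
  refine ⟨r, hr, hb, K, LipschitzOnWith.of_dist_le_mul fun y hy z hz => ?_⟩
  refine le_trans ?_ (hK.dist_le_mul y hy z hz)
  rw [dist_eq_norm, dist_eq_norm]
  exact PiLp.norm_apply_le (f y - f z) i

lemma norm_le_of_coord {m : ℕ} (v : EuclideanSpace ℝ (Fin m)) {c : ℝ} (hc : 0 ≤ c)
    (h : ∀ i, |v i| ≤ c) : ‖v‖ ≤ (m + 1) * c := by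
  rw [EuclideanSpace.norm_eq]
  refine Real.sqrt_le_iff.2 ⟨by positivity, ?_⟩
  have h1 : ∑ i, ‖v i‖ ^ 2 ≤ ∑ _i : Fin m, c ^ 2 :=
    Finset.sum_le_sum fun i _ => pow_le_pow_left₀ (norm_nonneg _) (h i) 2
  rw [Finset.sum_const, Finset.card_univ, Fintype.card_fin, nsmul_eq_mul] at h1
  have hm : (0 : ℝ) ≤ m := Nat.cast_nonneg m
  nlinarith [sq_nonneg c, mul_nonneg hm (sq_nonneg c), mul_nonneg (mul_nonneg hm hm) (sq_nonneg c)]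

lemma one_step {n m : ℕ}
    (Ω : Set (EuclideanSpace ℝ (Fin n))) (hΩo : IsOpen Ω) (hΩc : IsConnected Ω)
    (hΩsc : SimplyConnectedSpace ↥Ω)
    (f : EuclideanSpace ℝ (Fin n) → EuclideanSpace ℝ (Fin m))
    (hf : LocLipOn f Ω)
    (hrank : ∀ᵐ x ∂(volume : Measure (EuclideanSpace ℝ (Fin n))), x ∈ Ω →
      derivRank f x ≤ 1) {ε : ℝ} (hε : 0 < ε) :
    ∃ F : EuclideanSpace ℝ (Fin n) → EuclideanSpace ℝ (Fin m),
      ContDiffOn ℝ (⊤ : ℕ∞) F Ω ∧ (∀ x ∈ Ω, derivRank F x ≤ 1) ∧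
      ∀ x ∈ Ω, ‖F x - f x‖ ≤ (m + 1) * (10 * ε) := by
  obtain ⟨x₀, hx₀⟩ := hΩc.nonempty
  have hfi : ∀ i, LocLipOn (fun x => f x i) Ω := hf.coord
  obtain ⟨D, hD, hD0, hDmax⟩ := exists_max_dom hΩo hΩc.isPreconnected hfi hx₀
  obtain ⟨b, hb, hbD⟩ := exists_smooth_near hΩo (hD.locLip hΩo hfi).continuousOn hε
  refine exists_rank_one_near hΩo (a := fun x => b x / ε)
    (fun x hx => (hb x hx).div_const ε) ?_
  intro k A hA hAc hAΩ hAk x hx y hy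
  refine norm_le_of_coord _ (by positivity) fun i => ?_
  have hbd : ∀ z ∈ A, ((k : ℝ) - 3) * ε + ε ≤ D z ∧ D z ≤ (k - 3) * ε + 5 * ε := by
    intro z hz
    obtain ⟨h1, h2⟩ := hAk z hz
    rw [lt_div_iff₀ hε] at h1
    rw [div_lt_iff₀ hε] at h2
    have h3 := abs_lt.1 (hbD z (hAΩ hz))
    constructor <;> nlinarith [h3.1, h3.2]
  have := osc_bound hΩo hΩsc hfi hrank hD hD0 hDmax hε hA hAc hAΩ (fun z hz => (hbd z hz).1)
    (fun z hz => (hbd z hz).2) i x hx y hy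
  have e : (f x - f y) i = f x i - f y i := rfl
  rw [e]; linarith

end Construction

/-- Main theorem: if `Ω ⊆ ℝⁿ` is a simply connected domain and `f : Ω → ℝᵐ` is locally
Lipschitz with `rank Df ≤ 1` a.e. in `Ω`, then there are `C^∞`-smooth maps
`fᵢ : Ω → ℝᵐ` with `rank Dfᵢ ≤ 1` everywhere in `Ω` converging to `f` uniformly on
every compact subset of `Ω`. -/
theorem smooth_rank_one_approximation {n m : ℕ}
    (Ω : Set (EuclideanSpace ℝ (Fin n))) (hΩo : IsOpen Ω) (hΩc : IsConnected Ω)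
    (hΩsc : SimplyConnectedSpace ↥Ω)
    (f : EuclideanSpace ℝ (Fin n) → EuclideanSpace ℝ (Fin m))
    (hf : LocLipOn f Ω)
    (hrank : ∀ᵐ x ∂(volume : Measure (EuclideanSpace ℝ (Fin n))), x ∈ Ω →
      derivRank f x ≤ 1) :
    ∃ F : ℕ → EuclideanSpace ℝ (Fin n) → EuclideanSpace ℝ (Fin m),
      (∀ i, ContDiffOn ℝ (⊤ : ℕ∞) (F i) Ω) ∧
      (∀ i, ∀ x ∈ Ω, derivRank (F i) x ≤ 1) ∧
      (∀ K : Set (EuclideanSpace ℝ (Fin n)), K ⊆ Ω → IsCompact K →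
        TendstoUniformlyOn (fun i => F i) f Filter.atTop K) := by
  have hpos : ∀ i : ℕ, (0 : ℝ) < 1 / ((i : ℝ) + 1) := fun i => Nat.one_div_pos_of_nat
  choose F hF1 hF2 hF3 using fun i : ℕ => one_step Ω hΩo hΩc hΩsc f hf hrank (hpos i)
  refine ⟨F, hF1, hF2, fun K hK _ => ?_⟩
  rw [Metric.tendstoUniformlyOn_iff]
  intro η hη
  have hlim : Filter.Tendsto (fun i : ℕ => ((m : ℝ) + 1) * (10 * (1 / ((i : ℝ) + 1))))
      Filter.atTop (𝓝 (((m : ℝ) + 1) * (10 * 0))) :=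
    (tendsto_one_div_add_atTop_nhds_zero_nat.const_mul 10).const_mul _
  rw [mul_zero, mul_zero] at hlim
  filter_upwards [hlim.eventually (gt_mem_nhds hη)] with i hi x hx
  rw [dist_comm, dist_eq_norm]
  exact (hF3 i x (hK hx)).trans_lt hi
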